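/- Representation Formula: Let Ω ⊆ M be a p-symmetric slice domain and f : Ω → 𝔸 a left generalized partial-slice monogenic function. Then for every ω, η ∈ 𝕊 and every point x_p + rω ∈ Ω: f(x_p + rω) = (1/2)(f(x_p + rη) + f(x_p − rη)) + (1/2) ω (η (f(x_p − rη) − f(x_p + rη))). Moreover the functions F₁(x_p, r) = (1/2)(f(x_p + rη) + f(x_p − rη)) and F₂(x_p, r) = (1/2) η (f(x_p − rη) − f(x_p + rη)) do not depend on the choice of η ∈ 𝕊. -/

import Mathlib

open scoped BigOperators
open Filter Topology

namespace GPSM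

variable (A : Type*) [NormedAddCommGroup A] [NormedSpace ℝ A] [Mul A] [One A]

/-- `A` is a real alternative algebra with unit `1`, of finite dimension `d > 1`,
equipped with an anti-involution `conj` (a real-linear map with `(a^c)^c = a`,
`(ab)^c = b^c a^c`, fixing the reals).  The associator is alternating (left/right
alternative laws). -/
structure IsAltStarAlg (conj : A → A) : Prop where
  finDim : FiniteDimensional ℝ A
  one_lt_finrank : 1 < Module.finrank ℝ A
  mul_add' : ∀ a b c : A, a * (b + c) = a * b + a * c
  add_mul' : ∀ a b c : A, (a + b) * c = a * c + b * c
  smul_mul' : ∀ (r : ℝ) (a b : A), (r • a) * b = r • (a * b)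
  mul_smul' : ∀ (r : ℝ) (a b : A), a * (r • b) = r • (a * b)
  one_mul' : ∀ a : A, 1 * a = a
  mul_one' : ∀ a : A, a * 1 = a
  alt_left : ∀ a b : A, a * (a * b) = a * a * b
  alt_right : ∀ a b : A, a * b * b = a * (b * b)
  conj_add : ∀ a b : A, conj (a + b) = conj a + conj b
  conj_smul : ∀ (r : ℝ) (a : A), conj (r • a) = r • conj a
  conj_conj : ∀ a : A, conj (conj a) = a
  conj_mul : ∀ a b : A, conj (a * b) = conj b * conj a
  conj_one : conj 1 = 1

/-- `v 0, v 1, …, v m` is a hypercomplex basis of the hypercomplex subspace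
`M = span(v 0, …, v m)` of `A`: `v 0 = 1`, `t(v s) = 0`, `n(v s) = 1`, the `v s`
anticommute for distinct `s, t ∈ {1,…,m}`, they are linearly independent, and
`M` is contained in the quadratic cone `Q_A`. -/
structure IsHypBasis (conj : A → A) (v : ℕ → A) (m : ℕ) : Prop where
  v_zero : v 0 = 1
  trace_zero : ∀ s, 1 ≤ s → s ≤ m → v s + conj (v s) = 0
  norm_one : ∀ s, 1 ≤ s → s ≤ m → v s * conj (v s) = 1
  anticomm : ∀ s t, 1 ≤ s → s ≤ m → 1 ≤ t → t ≤ m → s ≠ t → v s * v t = -(v t * v s)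
  indep : LinearIndependent ℝ (fun i : Fin (m + 1) => v i)
  mem_cone : ∀ x ∈ Submodule.span ℝ (Set.range fun i : Fin (m + 1) => v (i : ℕ)),
      ∃ tr nr : ℝ, x + conj x = tr • (1 : A) ∧ x * conj x = nr • (1 : A) ∧
        ((∃ r : ℝ, x = r • (1 : A)) ∨ tr ^ 2 < 4 * nr)

variable {A}

/-- Identification of `ℝ^{m+1}` with the hypercomplex subspace `M`:
`(x_0,…,x_m) ↦ Σ x_s • v s`. -/
def emb (v : ℕ → A) (m : ℕ) (x : Fin (m + 1) → ℝ) : A :=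
  ∑ s : Fin (m + 1), x s • v (s : ℕ)

/-- First `p+1` coordinates of a point of `M ≅ ℝ^{m+1}`, i.e. the `x_p`-part. -/
def projP (m p : ℕ) (x : Fin (m + 1) → ℝ) : Fin (p + 1) → ℝ := fun s =>
  if h : (s : ℕ) < m + 1 then x ⟨(s : ℕ), h⟩ else 0

/-- Inclusion `ℝ^{p+1} ⊆ ℝ^{m+1}` (remaining coordinates `0`). -/
def injP (m p : ℕ) (y : Fin (p + 1) → ℝ) : Fin (m + 1) → ℝ := fun s =>
  if h : (s : ℕ) < p + 1 then y ⟨(s : ℕ), h⟩ else 0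

/-- The coordinates of `x_q` (last `q = m - p` coordinates of `x`). -/
def xqpart (m p : ℕ) (x : Fin (m + 1) → ℝ) : Fin (m + 1) → ℝ := fun s =>
  if (s : ℕ) ≤ p then 0 else x s

/-- The coordinates of `x_p` inside `ℝ^{m+1}`. -/
def xppart (m p : ℕ) (x : Fin (m + 1) → ℝ) : Fin (m + 1) → ℝ := fun s =>
  if (s : ℕ) ≤ p then x s else 0

/-- `r = |x_q|`. -/
noncomputable def rad (m p : ℕ) (x : Fin (m + 1) → ℝ) : ℝ :=
  Real.sqrt (∑ s : Fin (m + 1), (xqpart m p x s) ^ 2)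

/-- `ω = x_q / |x_q|` (coordinates), `0` when `x_q = 0`. -/
noncomputable def normq (m p : ℕ) (x : Fin (m + 1) → ℝ) : Fin (m + 1) → ℝ :=
  (rad m p x)⁻¹ • xqpart m p x

/-- The reflection `x = x_p + x_q ↦ x_⋄ = x_p - x_q`. -/
def reflP (m p : ℕ) (x : Fin (m + 1) → ℝ) : Fin (m + 1) → ℝ := fun s =>
  if (s : ℕ) ≤ p then x s else -x s

/-- The sphere `𝕊 = {x_q ∈ span(v_{p+1},…,v_m) : x_q² = -1}`, in coordinates. -/
def Sph (v : ℕ → A) (m p : ℕ) : Set (Fin (m + 1) → ℝ) :=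
  {w | (∀ s : Fin (m + 1), (s : ℕ) ≤ p → w s = 0) ∧ emb v m w * emb v m w = -1}

/-- The point `x_p + r ω` of `M ≅ ℝ^{m+1}`. -/
def pt (m p : ℕ) (w : Fin (m + 1) → ℝ) (y : Fin (p + 1) → ℝ) (r : ℝ) :
    Fin (m + 1) → ℝ :=
  injP m p y + r • w

/-- The slice `Ω_ω ⊆ ℝ^{p+2}` of `Ω` at `ω`. -/
def sliceSet (m p : ℕ) (Ω : Set (Fin (m + 1) → ℝ)) (w : Fin (m + 1) → ℝ) :
    Set ((Fin (p + 1) → ℝ) × ℝ) := {z | pt m p w z.1 z.2 ∈ Ω}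

/-- The restriction `f_ω` of `f` to the slice at `ω`, as a function on `ℝ^{p+2}`. -/
def sliceFun (m p : ℕ) (f : (Fin (m + 1) → ℝ) → A) (w : Fin (m + 1) → ℝ) :
    (Fin (p + 1) → ℝ) × ℝ → A := fun z => f (pt m p w z.1 z.2)

/-- Partial derivative `∂_{x_s}` of a function on `ℝ^{m+1}`. -/
noncomputable def pdF (m : ℕ) (s : Fin (m + 1)) (f : (Fin (m + 1) → ℝ) → A)
    (x : Fin (m + 1) → ℝ) : A := fderiv ℝ f x (Pi.single s 1)

/-- Partial derivative `∂_{x_s}` of a function on `ℝ^{p+1}`. -/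
noncomputable def pdP (p : ℕ) (s : Fin (p + 1)) (g : (Fin (p + 1) → ℝ) → A)
    (y : Fin (p + 1) → ℝ) : A := fderiv ℝ g y (Pi.single s 1)

/-- Partial derivative `∂_{x_s}` of a function on `ℝ^{p+2} = ℝ^{p+1} × ℝ`. -/
noncomputable def pdSx (p : ℕ) (s : Fin (p + 1)) (G : (Fin (p + 1) → ℝ) × ℝ → A)
    (z : (Fin (p + 1) → ℝ) × ℝ) : A := fderiv ℝ G z (Pi.single s 1, 0)

/-- Partial derivative `∂_r` of a function on `ℝ^{p+2} = ℝ^{p+1} × ℝ`. -/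
noncomputable def pdSr (p : ℕ) (G : (Fin (p + 1) → ℝ) × ℝ → A)
    (z : (Fin (p + 1) → ℝ) × ℝ) : A := fderiv ℝ G z (0, 1)

/-- Second partial derivative `∂_r²`. -/
noncomputable def pdSr2 (p : ℕ) (G : (Fin (p + 1) → ℝ) × ℝ → A)
    (z : (Fin (p + 1) → ℝ) × ℝ) : A := pdSr p (pdSr p G) z

/-- The operator `Σ_{lo ≤ s ≤ hi} v_s ∂_{x_s}` on functions on `ℝ^{m+1}`.
`Dop v m 0 p` is `D_{x_p}`, `Dop v m (p+1) m` is `D_{x_q}`, `Dop v m 0 m` is `D_x`. -/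
noncomputable def Dop (v : ℕ → A) (m lo hi : ℕ) (f : (Fin (m + 1) → ℝ) → A)
    (x : Fin (m + 1) → ℝ) : A :=
  ∑ s : Fin (m + 1), if lo ≤ (s : ℕ) ∧ (s : ℕ) ≤ hi then v (s : ℕ) * pdF m s f x else 0

/-- The conjugate operator `∂_{x_0} - Σ_{1 ≤ s ≤ hi} v_s ∂_{x_s}` on functions on
`ℝ^{m+1}`; `Dbarop v m p` is `D̄_{x_p}`, `Dbarop v m m` is `D̄_x`. -/
noncomputable def Dbarop (v : ℕ → A) (m hi : ℕ) (f : (Fin (m + 1) → ℝ) → A)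
    (x : Fin (m + 1) → ℝ) : A :=
  pdF m 0 f x -
    ∑ s : Fin (m + 1), if 1 ≤ (s : ℕ) ∧ (s : ℕ) ≤ hi then v (s : ℕ) * pdF m s f x else 0

/-- The operator `D_{x_p} = Σ_{s=0}^p v_s ∂_{x_s}` on functions on `ℝ^{p+1}`. -/
noncomputable def DopP (v : ℕ → A) (p : ℕ) (g : (Fin (p + 1) → ℝ) → A)
    (y : Fin (p + 1) → ℝ) : A :=
  ∑ s : Fin (p + 1), v (s : ℕ) * pdP p s g y

/-- The operator `D̄_{x_p} = ∂_{x_0} - Σ_{s=1}^p v_s ∂_{x_s}` on functions on `ℝ^{p+1}`. -/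
noncomputable def DbaropP (v : ℕ → A) (p : ℕ) (g : (Fin (p + 1) → ℝ) → A)
    (y : Fin (p + 1) → ℝ) : A :=
  pdP p 0 g y - ∑ s : Fin (p + 1), if 1 ≤ (s : ℕ) then v (s : ℕ) * pdP p s g y else 0

/-- The operator `D_{x_p}` on functions on `ℝ^{p+2} = ℝ^{p+1} × ℝ`. -/
noncomputable def DopSx (v : ℕ → A) (p : ℕ) (G : (Fin (p + 1) → ℝ) × ℝ → A)
    (z : (Fin (p + 1) → ℝ) × ℝ) : A :=
  ∑ s : Fin (p + 1), v (s : ℕ) * pdSx p s G z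

/-- The operator `D̄_{x_p}` on functions on `ℝ^{p+2} = ℝ^{p+1} × ℝ`. -/
noncomputable def DbaropSx (v : ℕ → A) (p : ℕ) (G : (Fin (p + 1) → ℝ) × ℝ → A)
    (z : (Fin (p + 1) → ℝ) × ℝ) : A :=
  pdSx p 0 G z - ∑ s : Fin (p + 1), if 1 ≤ (s : ℕ) then v (s : ℕ) * pdSx p s G z else 0

/-- The Laplacian `Δ_x` on functions on `ℝ^{m+1}`. -/
noncomputable def lapF (m : ℕ) (f : (Fin (m + 1) → ℝ) → A)
    (x : Fin (m + 1) → ℝ) : A :=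
  ∑ s : Fin (m + 1), pdF m s (pdF m s f) x

/-- The Laplacian `Δ_{x_p}` on functions on `ℝ^{p+1}`. -/
noncomputable def lapP (p : ℕ) (g : (Fin (p + 1) → ℝ) → A)
    (y : Fin (p + 1) → ℝ) : A :=
  ∑ s : Fin (p + 1), pdP p s (pdP p s g) y

/-- Iterated Laplacian `Δ_x^k`. -/
noncomputable def lapIterF (m k : ℕ) (f : (Fin (m + 1) → ℝ) → A) :
    (Fin (m + 1) → ℝ) → A :=
  (fun g => lapF m g)^[k] f

/-- Iterated Laplacian `Δ_{x_p}^k`. -/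
noncomputable def lapIterP (p k : ℕ) (g : (Fin (p + 1) → ℝ) → A) :
    (Fin (p + 1) → ℝ) → A :=
  (fun h => lapP p h)^[k] g

/-- The Laplacian `Δ_{x'} = Δ_{x_p} + ∂_r²` on functions on `ℝ^{p+2}`. -/
noncomputable def lapSx (p : ℕ) (G : (Fin (p + 1) → ℝ) × ℝ → A)
    (z : (Fin (p + 1) → ℝ) × ℝ) : A :=
  (∑ s : Fin (p + 1), pdSx p s (pdSx p s G) z) + pdSr2 p G z

/-- The slice Cauchy-Riemann operator `D_ω = D_{x_p} + ω ∂_r` applied to a function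
on `ℝ^{p+2}`, where `ω` is given in coordinates by `w`. -/
noncomputable def DomCR (v : ℕ → A) (m p : ℕ) (w : Fin (m + 1) → ℝ)
    (G : (Fin (p + 1) → ℝ) × ℝ → A) (z : (Fin (p + 1) → ℝ) × ℝ) : A :=
  DopSx v p G z + emb v m w * pdSr p G z

/-- `f` is left generalized partial-slice monogenic (of type `(p, m-p)`) on `Ω`. -/
def GSM (v : ℕ → A) (m p : ℕ) (f : (Fin (m + 1) → ℝ) → A)
    (Ω : Set (Fin (m + 1) → ℝ)) : Prop :=
  ∀ w ∈ Sph v m p, ContDiffOn ℝ 1 (sliceFun m p f w) (sliceSet m p Ω w) ∧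
    ∀ z ∈ sliceSet m p Ω w, DomCR v m p w (sliceFun m p f w) z = 0

/-- `Ω` is partially symmetric with respect to `ℝ^{p+1}`. -/
def PSym (v : ℕ → A) (m p : ℕ) (Ω : Set (Fin (m + 1) → ℝ)) : Prop :=
  ∀ x ∈ Ω, ∀ w ∈ Sph v m p, xppart m p x + rad m p x • w ∈ Ω

/-- `Ω` is a slice domain: a domain meeting `ℝ^{p+1}` all of whose slices are
domains in `ℝ^{p+2}`. -/
def SliceDomain (v : ℕ → A) (m p : ℕ) (Ω : Set (Fin (m + 1) → ℝ)) : Prop :=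
  IsOpen Ω ∧ IsConnected Ω ∧ (∃ x ∈ Ω, xqpart m p x = 0) ∧
    ∀ w ∈ Sph v m p, IsConnected (sliceSet m p Ω w)

/-- The reflection `(x_p, r) ↦ (x_p, -r)` of `ℝ^{p+2}`. -/
def reflD (p : ℕ) (z : (Fin (p + 1) → ℝ) × ℝ) : (Fin (p + 1) → ℝ) × ℝ := (z.1, -z.2)

/-- The p-symmetric completion `Ω_D ⊆ M` of `D ⊆ ℝ^{p+2}`. -/
def OmegaD (v : ℕ → A) (m p : ℕ) (D : Set ((Fin (p + 1) → ℝ) × ℝ)) :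
    Set (Fin (m + 1) → ℝ) :=
  {x | ∃ w ∈ Sph v m p, ∃ z ∈ D, x = pt m p w z.1 z.2}

/-- `(F₁, F₂)` satisfies the even-odd (stem function) conditions on `D`. -/
def IsStem (p : ℕ) (D : Set ((Fin (p + 1) → ℝ) × ℝ))
    (F₁ F₂ : (Fin (p + 1) → ℝ) × ℝ → A) : Prop :=
  ∀ z ∈ D, F₁ (reflD p z) = F₁ z ∧ F₂ (reflD p z) = -F₂ z

/-- `f` is the generalized partial-slice function induced by the stem `(F₁, F₂)`:
`f(x_p + rω) = F₁(x_p, r) + ω F₂(x_p, r)`. -/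
def Induced (v : ℕ → A) (m p : ℕ) (D : Set ((Fin (p + 1) → ℝ) × ℝ))
    (F₁ F₂ : (Fin (p + 1) → ℝ) × ℝ → A) (f : (Fin (m + 1) → ℝ) → A) : Prop :=
  ∀ w ∈ Sph v m p, ∀ z ∈ D, f (pt m p w z.1 z.2) = F₁ z + emb v m w * F₂ z

/-- The generalized Cauchy-Riemann system for the stem `(F₁, F₂)` on `D`. -/
def StemCR (v : ℕ → A) (p : ℕ) (D : Set ((Fin (p + 1) → ℝ) × ℝ))
    (F₁ F₂ : (Fin (p + 1) → ℝ) × ℝ → A) : Prop :=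
  ∀ z ∈ D, DopSx v p F₁ z - pdSr p F₂ z = 0 ∧ DbaropSx v p F₂ z + pdSr p F₁ z = 0

/-- `f` is generalized partial-slice regular on `Ω_D`. -/
def MemGSR (v : ℕ → A) (m p : ℕ) (D : Set ((Fin (p + 1) → ℝ) × ℝ))
    (f : (Fin (m + 1) → ℝ) → A) : Prop :=
  ∃ F₁ F₂ : (Fin (p + 1) → ℝ) × ℝ → A, IsStem p D F₁ F₂ ∧
    ContDiffOn ℝ 1 F₁ D ∧ ContDiffOn ℝ 1 F₂ D ∧
    Induced v m p D F₁ F₂ f ∧ StemCR v p D F₁ F₂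

/-- `f` is a generalized partial-slice function on `Ω`. -/
def MemGS (v : ℕ → A) (m p : ℕ) (Ω : Set (Fin (m + 1) → ℝ))
    (f : (Fin (m + 1) → ℝ) → A) : Prop :=
  ∃ F₁ F₂ : (Fin (p + 1) → ℝ) × ℝ → A,
    (∀ z : (Fin (p + 1) → ℝ) × ℝ, F₁ (reflD p z) = F₁ z ∧ F₂ (reflD p z) = -F₂ z) ∧
    ∀ x ∈ Ω, f x = F₁ (projP m p x, rad m p x) +
      emb v m (normq m p x) * F₂ (projP m p x, rad m p x)

/-- Non-associative power: `a^n` with products taken from the right. -/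
def apow (a : A) (n : ℕ) : A := (fun b => a * b)^[n] 1

/-- Partial even part `PE[f](x) = (f(x) + f(x_⋄))/2`. -/
noncomputable def PE (m p : ℕ) (f : (Fin (m + 1) → ℝ) → A)
    (x : Fin (m + 1) → ℝ) : A := (2 : ℝ)⁻¹ • (f x + f (reflP m p x))

/-- Partial odd part `PO[f](x) = (f(x) - f(x_⋄))/2`. -/
noncomputable def PO (m p : ℕ) (f : (Fin (m + 1) → ℝ) → A)
    (x : Fin (m + 1) → ℝ) : A := (2 : ℝ)⁻¹ • (f x - f (reflP m p x))

/-- `Ω₀* = {x_p + x_q : x_p ∈ Ω₀, x_q ∈ ℝ^q}`. -/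
def Omega0star (m p : ℕ) (Ω₀ : Set (Fin (p + 1) → ℝ)) : Set (Fin (m + 1) → ℝ) :=
  {x | projP m p x ∈ Ω₀}

/-- The spherical derivative `f'_s(x) = (1/2) x_q⁻¹ (f(x) - f(x_⋄))`
(using `x_q⁻¹ = -x_q/|x_q|²`). -/
noncomputable def sder (v : ℕ → A) (m p : ℕ) (f : (Fin (m + 1) → ℝ) → A)
    (x : Fin (m + 1) → ℝ) : A :=
  -(((2 : ℝ) * rad m p x ^ 2)⁻¹) • (emb v m (xqpart m p x) * (f x - f (reflP m p x)))

/-- The spherical Dirac operator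
`Γ f = -(1/2) Σ_{p+1 ≤ i,j ≤ m} v_i (v_j (L_{ij} f))`. -/
noncomputable def sphericalGamma (v : ℕ → A) (m p : ℕ) (f : (Fin (m + 1) → ℝ) → A)
    (x : Fin (m + 1) → ℝ) : A :=
  -((2 : ℝ)⁻¹) • ∑ i : Fin (m + 1), ∑ j : Fin (m + 1),
    if p < (i : ℕ) ∧ p < (j : ℕ) then
      v (i : ℕ) * (v (j : ℕ) * (x i • pdF m j f x - x j • pdF m i f x)) else 0

/-- The slice Cauchy-Riemann operator `D_ω` applied to (the slice restriction of) a
function `f` on `M`, at the point `x` (with `ω = x_q/|x_q|`). -/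
noncomputable def DomCRat (v : ℕ → A) (m p : ℕ) (f : (Fin (m + 1) → ℝ) → A)
    (x : Fin (m + 1) → ℝ) : A :=
  DomCR v m p (normq m p x) (sliceFun m p f (normq m p x)) (projP m p x, rad m p x)

/-- `f` is left monogenic on `Ω`: `f ∈ C¹` and `D_x f = 0`. -/
def Monogenic (v : ℕ → A) (m : ℕ) (f : (Fin (m + 1) → ℝ) → A)
    (Ω : Set (Fin (m + 1) → ℝ)) : Prop :=
  ContDiffOn ℝ 1 f Ω ∧ ∀ x ∈ Ω, Dop v m 0 m f x = 0

/-- `f` is harmonic on `Ω`: `f ∈ C²` and `Δ_x f = 0`. -/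
def Harmonic (m : ℕ) (f : (Fin (m + 1) → ℝ) → A)
    (Ω : Set (Fin (m + 1) → ℝ)) : Prop :=
  ContDiffOn ℝ 2 f Ω ∧ ∀ x ∈ Ω, lapF m f x = 0

/-- A family of functions converges normally (locally a summable uniform bound). -/
def NormallyConvOn {E F : Type*} [TopologicalSpace E] [NormedAddCommGroup F]
    (u : ℕ → E → F) (s : Set E) : Prop :=
  ∀ x ∈ s, ∃ U ∈ nhds x, ∃ c : ℕ → ℝ, Summable c ∧ ∀ k : ℕ, ∀ y ∈ U, ‖u k y‖ ≤ c k

/-- The generalized partial-slice CK-extension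
`CK[f₀](x) = Σ_k (r^{2k}/(2k)!)(-Δ_{x_p})^k f₀(x_p)
  + ω Σ_k (r^{2k+1}/(2k+1)!)(-Δ_{x_p})^k (D_{x_p} f₀)(x_p)`. -/
noncomputable def CKe (v : ℕ → A) (m p : ℕ) (f₀ : (Fin (p + 1) → ℝ) → A)
    (x : Fin (m + 1) → ℝ) : A :=
  (∑' k : ℕ, (((-1 : ℝ) ^ k * rad m p x ^ (2 * k)) / (2 * k).factorial) •
      lapIterP p k f₀ (projP m p x)) +
  emb v m (normq m p x) *
    ∑' k : ℕ, (((-1 : ℝ) ^ k * rad m p x ^ (2 * k + 1)) / (2 * k + 1).factorial) •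
      lapIterP p k (DopP v p f₀) (projP m p x)

/-- The coefficient `Γ(q/2)(-1)^k r^{2k} / (2^{2k} k! Γ(k + q/2))`. -/
noncomputable def hgckC (q k : ℕ) (r : ℝ) : ℝ :=
  (Real.Gamma ((q : ℝ) / 2) * (-1) ^ k * r ^ (2 * k)) /
    (2 ^ (2 * k) * (k.factorial : ℝ) * Real.Gamma ((k : ℝ) + (q : ℝ) / 2))

/-- The coefficient `Γ(q/2)(-1)^k r^{2k} / (2^{2k+1} k! Γ(k + q/2 + 1))`. -/
noncomputable def gckC' (q k : ℕ) (r : ℝ) : ℝ :=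
  (Real.Gamma ((q : ℝ) / 2) * (-1) ^ k * r ^ (2 * k)) /
    (2 ^ (2 * k + 1) * (k.factorial : ℝ) * Real.Gamma ((k : ℝ) + (q : ℝ) / 2 + 1))

/-- The coefficient `Γ(q/2 + 1)(-1)^k r^{2k} / (2^{2k} k! Γ(k + q/2 + 1))`. -/
noncomputable def hgckC' (q k : ℕ) (r : ℝ) : ℝ :=
  (Real.Gamma ((q : ℝ) / 2 + 1) * (-1) ^ k * r ^ (2 * k)) /
    (2 ^ (2 * k) * (k.factorial : ℝ) * Real.Gamma ((k : ℝ) + (q : ℝ) / 2 + 1))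

/-- The monogenic generalized CK-extension `GCK[A₀]`. -/
noncomputable def GCKe (v : ℕ → A) (m p : ℕ) (A₀ : (Fin (p + 1) → ℝ) → A)
    (x : Fin (m + 1) → ℝ) : A :=
  (∑' k : ℕ, hgckC (m - p) k (rad m p x) • lapIterP p k A₀ (projP m p x)) +
  emb v m (xqpart m p x) *
    ∑' k : ℕ, gckC' (m - p) k (rad m p x) • lapIterP p k (DopP v p A₀) (projP m p x)

/-- The harmonic generalized CK-extension `HGCK[A₀, A₁]`. -/
noncomputable def HGCKe (v : ℕ → A) (m p : ℕ) (A₀ A₁ : (Fin (p + 1) → ℝ) → A)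
    (x : Fin (m + 1) → ℝ) : A :=
  (∑' k : ℕ, hgckC (m - p) k (rad m p x) • lapIterP p k A₀ (projP m p x)) +
  emb v m (xqpart m p x) *
    ∑' k : ℕ, hgckC' (m - p) k (rad m p x) • lapIterP p k A₁ (projP m p x)

/-- The operator `(1/r)∂_r`, extended to `r = 0` by its limit `∂_r²` (on even
functions). -/
noncomputable def T1 (p : ℕ) (G : (Fin (p + 1) → ℝ) × ℝ → A) :
    (Fin (p + 1) → ℝ) × ℝ → A := fun z =>
  if z.2 = 0 then pdSr2 p G z else (z.2)⁻¹ • pdSr p G z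

/-- The operator `∂_r ∘ (1/r)`, extended to `r = 0` by its limit `(1/2)∂_r²` (on odd
functions). -/
noncomputable def T2 (p : ℕ) (G : (Fin (p + 1) → ℝ) × ℝ → A) :
    (Fin (p + 1) → ℝ) × ℝ → A := fun z =>
  if z.2 = 0 then (2 : ℝ)⁻¹ • pdSr2 p G z
  else fderiv ℝ (fun t : ℝ => t⁻¹ • G (z.1, t)) z.2 1

/-- `C_q(k) = (q-1)(q-3)⋯(q-2k+1)`, `C_q(0) = 1`. -/
noncomputable def cq (q k : ℕ) : ℝ :=
  ∏ i ∈ Finset.range k, ((q : ℝ) - (2 * (i : ℝ) + 1))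

/-- Double factorial. -/
def dfac : ℕ → ℕ
  | 0 => 1
  | 1 => 1
  | n + 2 => (n + 2) * dfac n

/-- The Fueter-Sce constant `γ_q = (-1)^{(q-1)/2} (q-1)!!/(q-2)!!`. -/
noncomputable def gammaQ (q : ℕ) : ℝ :=
  (-1 : ℝ) ^ ((q - 1) / 2) * (dfac (q - 1) : ℝ) / (dfac (q - 2) : ℝ)

/- The restriction of `f` to a slice is a null solution of a first-order operator `D` whose symbol
satisfies the Clifford relations, so that `D` factors the Laplacian. Averaging against a radial
mollifier therefore reproduces null solutions; this bounds their gradient in terms of their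
supremum, iterating the bound gives derivative estimates of analytic type, and a null solution
vanishing on the hyperplane `r = 0` vanishes, because its normal derivative there is determined by
the tangential ones.

With `G` the restriction of `f` to the slice through `η`, the right-hand side of the formula is
`½(1 - ωη) G(x_p, r) + ½(1 + ωη) G(x_p, -r)`. The operators `½(1 ∓ ωη)` intertwine the equations
for `±η` and `ω`, so this is a null solution on the slice through `ω`. It agrees with `f` on
`ℝ^{p+1}`, hence everywhere on that slice. -/

section

open MeasureTheory Metric
open scoped ContDiff RealInnerProductSpace

section CliffordPair

variable {ι E V : Type*} [Fintype ι] [NormedAddCommGroup E] [InnerProductSpace ℝ E]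
  [NormedAddCommGroup V] [NormedSpace ℝ V] {L L' : E →ₗ[ℝ] V →L[ℝ] V}

/-- `L` is a Clifford symbol on `E` with coefficients in `V`, with conjugate symbol `L'`: the
composition `L' e ∘ L e` is multiplication by `‖e‖²`. It is what makes the first-order operator
with symbol `L` factor the Laplacian. -/
def IsCliffordPair (L L' : E →ₗ[ℝ] V →L[ℝ] V) : Prop :=
  ∀ e x, L' e (L e x) = ‖e‖ ^ 2 • x

theorem IsCliffordPair.add_swap (hL : IsCliffordPair L L') (e e' : E) (x : V) :
    L' e (L e' x) + L' e' (L e x) = (2 * ⟪e, e'⟫) • x := by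
  have h := hL (e + e') x
  simp only [map_add, add_apply, hL e, hL e'] at h
  rw [← sub_eq_zero] at h ⊢
  rw [← h, norm_add_sq_real]
  module

theorem IsCliffordPair.eq_zero_of_apply_eq_zero (hL : IsCliffordPair L L') {e : E} (he : e ≠ 0)
    {x : V} (hx : L e x = 0) : x = 0 := by
  have h := hL e x
  rw [hx, map_zero, eq_comm, smul_eq_zero] at h
  exact h.resolve_left (pow_ne_zero 2 (norm_ne_zero_iff.2 he))

theorem IsCliffordPair.sum_diag_eq_zero (hL : IsCliffordPair L L') (b : OrthonormalBasis ι ℝ E)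
    {I : ι → ι → V} (hsymm : ∀ j k, I j k = I k j) (hI : ∀ k, ∑ j, L (b j) (I j k) = 0) :
    ∑ k, I k k = 0 := by
  classical
  have hsum : ∑ k, ∑ j, L' (b k) (L (b j) (I j k)) = 0 :=
    Finset.sum_eq_zero fun k _ => by rw [← map_sum, hI, map_zero]
  have hswap : ∑ k, ∑ j, L' (b j) (L (b k) (I j k)) = 0 := by
    rw [Finset.sum_comm, ← hsum]
    simp only [hsymm]
  have hdiag : ∑ k, ∑ j, (2 * ⟪b k, b j⟫) • I j k = (2 : ℝ) • ∑ k, I k k := by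
    simp [b.inner_eq_ite, Finset.smul_sum]
  have htwo : (2 : ℝ) • ∑ k, I k k = 0 := by
    simp only [← hdiag, ← hL.add_swap, Finset.sum_add_distrib, hsum, hswap, add_zero]
  exact (smul_eq_zero.1 htwo).resolve_left two_ne_zero

end CliffordPair

section DiracOp

variable {ι E V : Type*} [Fintype ι] [NormedAddCommGroup E] [InnerProductSpace ℝ E]
  [NormedAddCommGroup V] [NormedSpace ℝ V] {b : OrthonormalBasis ι ℝ E}
  {L L' : E →ₗ[ℝ] V →L[ℝ] V} {U W : Set E} {h g : E → V}

/-- The Dirac operator `∑ⱼ L(bⱼ) ∂_{bⱼ}` with symbol `L`. -/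
noncomputable def diracOp (b : OrthonormalBasis ι ℝ E) (L : E →ₗ[ℝ] V →L[ℝ] V) (h : E → V)
    (z : E) : V :=
  ∑ j, L (b j) (fderiv ℝ h z (b j))

/-- `h` is a null solution of `diracOp b L` on `U`, i.e. it is monogenic for the symbol `L`. -/
structure IsMonogenicOn (b : OrthonormalBasis ι ℝ E) (L : E →ₗ[ℝ] V →L[ℝ] V) (h : E → V)
    (U : Set E) : Prop where
  contDiffOn : ContDiffOn ℝ 1 h U
  diracOp_eq_zero : ∀ z ∈ U, diracOp b L h z = 0

theorem IsMonogenicOn.mono (hh : IsMonogenicOn b L h U) (hWU : W ⊆ U) : IsMonogenicOn b L h W :=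
  ⟨hh.contDiffOn.mono hWU, fun z hz => hh.diracOp_eq_zero z (hWU hz)⟩

theorem diracOp_congr (hU : IsOpen U) (hgh : Set.EqOn g h U) {z : E} (hz : z ∈ U) :
    diracOp b L g z = diracOp b L h z := by
  simp only [diracOp, (hgh.eventuallyEq_of_mem (hU.mem_nhds hz)).fderiv_eq]

theorem IsMonogenicOn.congr (hh : IsMonogenicOn b L h U) (hU : IsOpen U) (hgh : Set.EqOn g h U) :
    IsMonogenicOn b L g U :=
  ⟨hh.contDiffOn.congr hgh, fun z hz =>
    (diracOp_congr hU hgh hz).trans (hh.diracOp_eq_zero z hz)⟩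

theorem IsMonogenicOn.sub (hg : IsMonogenicOn b L g U) (hh : IsMonogenicOn b L h U)
    (hU : IsOpen U) : IsMonogenicOn b L (g - h) U := by
  refine ⟨hg.contDiffOn.sub hh.contDiffOn, fun z hz => ?_⟩
  have hg' := (hg.contDiffOn.contDiffAt (hU.mem_nhds hz)).differentiableAt one_ne_zero
  have hh' := (hh.contDiffOn.contDiffAt (hU.mem_nhds hz)).differentiableAt one_ne_zero
  have hz0 := congrArg₂ (· - ·) (hg.diracOp_eq_zero z hz) (hh.diracOp_eq_zero z hz)
  simpa only [diracOp, fderiv_sub hg' hh', sub_apply, map_sub, Finset.sum_sub_distrib,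
    sub_zero] using hz0

end DiracOp

section RadialKernel

variable {E : Type*} [NormedAddCommGroup E] [InnerProductSpace ℝ E]

theorem fderiv_inner_mul_comp_norm_sq {φ : ℝ → ℝ} (hφ : Differentiable ℝ φ) (e e' y : E) :
    fderiv ℝ (fun y => ⟪e, y⟫ * φ (‖y‖ ^ 2)) y e' =
      ⟪e, e'⟫ * φ (‖y‖ ^ 2) + 2 * deriv φ (‖y‖ ^ 2) * (⟪e, y⟫ * ⟪e', y⟫) := by
  have hinner : HasFDerivAt (fun y => ⟪e, y⟫) (innerSL ℝ e) y := (innerSL ℝ e).hasFDerivAt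
  have hφ' := (hφ (‖y‖ ^ 2)).hasDerivAt.comp_hasFDerivAt y (hasStrictFDerivAt_norm_sq y).hasFDerivAt
  have hprod : HasFDerivAt (fun y => ⟪e, y⟫ * φ (‖y‖ ^ 2)) _ y := hinner.mul hφ'
  rw [hprod.fderiv]
  simp only [add_apply, smul_apply, coe_innerSL_apply, nsmul_eq_mul, Nat.cast_ofNat, smul_eq_mul,
    real_inner_comm y e']
  ring

variable [FiniteDimensional ℝ E] [MeasurableSpace E] [BorelSpace E]

/-- The profile of `radialKernel`, as a function of `‖y‖²`: a smooth function vanishing on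
`[1, ∞)`, scaled so that `radialKernel` has integral `1`. -/
noncomputable def radialProfile (E : Type*) [NormedAddCommGroup E] [InnerProductSpace ℝ E]
    [FiniteDimensional ℝ E] [MeasurableSpace E] [BorelSpace E] (s : ℝ) : ℝ :=
  (∫ x : E, expNegInvGlue (1 - ‖x‖ ^ 2))⁻¹ * expNegInvGlue (1 - s)

/-- A smooth radial mollifier supported in the unit ball. The interface of Mathlib's
`ContDiffBump` does not provide radiality, on which the mean value property rests. -/
noncomputable def radialKernel (y : E) : ℝ :=
  radialProfile E (‖y‖ ^ 2)

theorem contDiff_radialProfile : ContDiff ℝ ∞ (radialProfile E) :=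
  contDiff_const.mul (expNegInvGlue.contDiff.comp (contDiff_const.sub contDiff_id))

theorem contDiff_radialKernel : ContDiff ℝ ∞ (radialKernel : E → ℝ) :=
  contDiff_radialProfile.comp (contDiff_norm_sq ℝ)

theorem radialKernel_eq_zero {y : E} (hy : 1 < ‖y‖) : radialKernel y = 0 := by
  rw [radialKernel, radialProfile, expNegInvGlue.zero_of_nonpos (by nlinarith), mul_zero]

theorem hasCompactSupport_radialKernel : HasCompactSupport (radialKernel : E → ℝ) :=
  .intro (isCompact_closedBall 0 1) fun y hy => radialKernel_eq_zero (by simpa using hy)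

theorem radialKernel_neg (y : E) : radialKernel (-y) = radialKernel y := by
  simp only [radialKernel, norm_neg]

theorem integral_radialKernel : ∫ y : E, radialKernel y = 1 := by
  have hcont : Continuous fun x : E => expNegInvGlue (1 - ‖x‖ ^ 2) :=
    (expNegInvGlue.contDiff (n := 0)).continuous.comp (by fun_prop)
  have hsupp : HasCompactSupport fun x : E => expNegInvGlue (1 - ‖x‖ ^ 2) :=
    .intro (isCompact_closedBall 0 1) fun y hy =>
      expNegInvGlue.zero_of_nonpos (by nlinarith [(by simpa using hy : 1 < ‖y‖)])
  have hpos : 0 < ∫ x : E, expNegInvGlue (1 - ‖x‖ ^ 2) :=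
    hcont.integral_pos_of_hasCompactSupport_nonneg_nonzero hsupp
      (fun x => expNegInvGlue.nonneg _) (x := 0) (expNegInvGlue.pos_of_pos (by simp)).ne'
  simp only [radialKernel, radialProfile]
  rw [integral_const_mul, inv_mul_cancel₀ hpos.ne']

theorem fderiv_inner_mul_radialKernel_comm (e e' y : E) :
    fderiv ℝ (fun y => ⟪e, y⟫ * radialKernel y) y e' =
      fderiv ℝ (fun y => ⟪e', y⟫ * radialKernel y) y e := by
  have hdiff : Differentiable ℝ (radialProfile E) := contDiff_radialProfile.differentiable (by simp)
  simp only [radialKernel]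
  rw [fderiv_inner_mul_comp_norm_sq hdiff, fderiv_inner_mul_comp_norm_sq hdiff,
    real_inner_comm e e', mul_comm ⟪e, y⟫]

end RadialKernel

section MeanValue

variable {E V : Type*} [NormedAddCommGroup E] [NormedSpace ℝ E]
  [FiniteDimensional ℝ E] [MeasurableSpace E] [BorelSpace E] {μ : Measure E}
  [μ.IsAddHaarMeasure] [NormedAddCommGroup V] [NormedSpace ℝ V] {h : E → V} {ψ : E → ℝ}

theorem smul_integral_smul_fderiv_dilation (hh : ContDiff ℝ 1 h) (hψ : ContDiff ℝ 1 ψ)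
    (hc : HasCompactSupport ψ) (x e : E) (t : ℝ) :
    t • ∫ y, ψ y • fderiv ℝ h (x + t • y) e ∂μ = -∫ y, fderiv ℝ ψ y e • h (x + t • y) ∂μ := by
  have hcomp : ContDiff ℝ 1 fun y => h (x + t • y) :=
    hh.comp (contDiff_const.add (contDiff_const_smul t))
  have hfderiv : ∀ y, fderiv ℝ (fun y => h (x + t • y)) y e = t • fderiv ℝ h (x + t • y) e := by
    intro y
    rw [fderiv_comp_smul (f := fun y => h (x + y)), fderiv_comp_add_left, smul_apply]
  have hψ' : Continuous fun y => fderiv ℝ ψ y e :=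
    (hψ.continuous_fderiv one_ne_zero).clm_apply continuous_const
  have hcomp' : Continuous fun y => fderiv ℝ (fun y => h (x + t • y)) y e :=
    (hcomp.continuous_fderiv one_ne_zero).clm_apply continuous_const
  have hparts := integral_smul_fderiv_eq_neg_fderiv_smul_of_integrable (μ := μ)
    ((hψ'.smul hcomp.continuous).integrable_of_hasCompactSupport (hc.fderiv_apply ℝ e).smul_right)
    ((hψ.continuous.smul hcomp').integrable_of_hasCompactSupport hc.smul_right)
    ((hψ.continuous.smul hcomp.continuous).integrable_of_hasCompactSupport hc.smul_right)
    (fun y _ => hψ.differentiable one_ne_zero y) (fun y _ => hcomp.differentiable one_ne_zero y)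
  simp only [← hparts, hfderiv, ← integral_smul, smul_comm t]

theorem hasDerivAt_integral_smul_dilation (hh : ContDiff ℝ 1 h) (hψ : Continuous ψ)
    (hc : HasCompactSupport ψ) (x : E) (t : ℝ) :
    HasDerivAt (fun s : ℝ => ∫ y, ψ y • h (x + s • y) ∂μ)
      (∫ y, ψ y • fderiv ℝ h (x + t • y) y ∂μ) t := by
  have hcont : ∀ s : ℝ, Continuous fun y => ψ y • h (x + s • y) := fun s =>
    hψ.smul (hh.continuous.comp (by fun_prop))
  have hcont' : Continuous fun q : ℝ × E => fderiv ℝ h (x + q.1 • q.2) q.2 :=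
    ((hh.continuous_fderiv one_ne_zero).comp (by fun_prop)).clm_apply continuous_snd
  obtain ⟨C, hC⟩ := ((isCompact_closedBall t 1).prod hc).exists_bound_of_continuousOn
    hcont'.continuousOn
  refine (hasDerivAt_integral_of_dominated_loc_of_deriv_le (bound := fun y => ‖ψ y‖ * C)
    (F' := fun s y => ψ y • fderiv ℝ h (x + s • y) y) (closedBall_mem_nhds t one_pos)
    (.of_forall fun s => (hcont s).aestronglyMeasurable)
    ((hcont t).integrable_of_hasCompactSupport hc.smul_right)
    (hψ.smul (hcont'.comp (.prodMk_right t))).aestronglyMeasurable ?_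
    ((hψ.integrable_of_hasCompactSupport hc).norm.mul_const C) ?_).2
  · refine .of_forall fun y s hs => ?_
    rw [norm_smul]
    by_cases hy : y ∈ tsupport ψ
    · exact mul_le_mul_of_nonneg_left (hC (s, y) ⟨hs, hy⟩) (norm_nonneg _)
    · simp [image_eq_zero_of_notMem_tsupport hy]
  · refine .of_forall fun y s _ => .const_smul (ψ y) ?_
    have hline : HasDerivAt (fun s : ℝ => x + s • y) y s := by
      simpa using ((hasDerivAt_id s).smul_const y).const_add x
    exact (hh.differentiable one_ne_zero (x + s • y)).hasFDerivAt.comp_hasDerivAt s hline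

end MeanValue

theorem add_smul_mem_ball {E : Type*} [SeminormedAddCommGroup E] [NormedSpace ℝ E] {x y : E}
    {R t : ℝ} (ht : 0 ≤ t) (htR : t < R) (hy : ‖y‖ ≤ 1) : x + t • y ∈ ball x R := by
  rw [mem_ball, dist_eq_norm, add_sub_cancel_left, norm_smul, Real.norm_of_nonneg ht]
  exact (mul_le_of_le_one_right ht hy).trans_lt htR

section MonogenicMeanValue

variable {ι E V : Type*} [Fintype ι] [NormedAddCommGroup E] [InnerProductSpace ℝ E]
  [FiniteDimensional ℝ E] [MeasurableSpace E] [BorelSpace E]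
  [NormedAddCommGroup V] [NormedSpace ℝ V] {b : OrthonormalBasis ι ℝ E}
  {L L' : E →ₗ[ℝ] V →L[ℝ] V} {h : E → V} {x : E} {R t : ℝ}

theorem integrable_inner_mul_radialKernel_smul (hh : ContDiff ℝ 1 h) (x e e' : E) (t : ℝ) :
    Integrable fun y => (⟪e, y⟫ * radialKernel y) • fderiv ℝ h (x + t • y) e' := by
  have hderiv : Continuous fun y => fderiv ℝ h (x + t • y) e' :=
    ((hh.continuous_fderiv one_ne_zero).comp (by fun_prop)).clm_apply continuous_const
  have hkernel : Continuous fun y : E => ⟪e, y⟫ * radialKernel y :=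
    (continuous_const.inner continuous_id).mul contDiff_radialKernel.continuous
  exact (hkernel.smul hderiv).integrable_of_hasCompactSupport
    hasCompactSupport_radialKernel.mul_left.smul_right

theorem integral_inner_mul_radialKernel_smul_fderiv_comm (hh : ContDiff ℝ 1 h) (x e e' : E)
    (ht : t ≠ 0) :
    ∫ y, (⟪e, y⟫ * radialKernel y) • fderiv ℝ h (x + t • y) e' =
      ∫ y, (⟪e', y⟫ * radialKernel y) • fderiv ℝ h (x + t • y) e := by
  have hkernel : ∀ e : E, ContDiff ℝ 1 fun y => ⟪e, y⟫ * radialKernel y := fun e =>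
    (contDiff_const.inner ℝ contDiff_id).mul (contDiff_radialKernel.of_le (by simp))
  refine smul_right_injective V ht ?_
  simp only [smul_integral_smul_fderiv_dilation hh (hkernel _)
    hasCompactSupport_radialKernel.mul_left, fderiv_inner_mul_radialKernel_comm e e']

theorem integral_radialKernel_smul_clm_eq_zero (T : E →L[ℝ] V) :
    ∫ y, radialKernel y • T y = 0 := by
  have : IsAddTorsionFree V := .of_isTorsionFree ℝ V
  refine self_eq_neg.1 ?_
  rw [← integral_neg, ← integral_neg_eq_self]
  simp only [radialKernel_neg, map_neg, smul_neg]

variable [CompleteSpace V]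

theorem IsMonogenicOn.sum_apply_integral_eq_zero (hh : ContDiff ℝ 1 h)
    (hm : IsMonogenicOn b L h (ball x R)) (ht : 0 ≤ t) (htR : t < R) (e : E) :
    ∑ j, L (b j) (∫ y, (⟪e, y⟫ * radialKernel y) • fderiv ℝ h (x + t • y) (b j)) = 0 := by
  have hint := fun j => integrable_inner_mul_radialKernel_smul hh x e (b j) t
  simp only [← (L (b _)).integral_comp_comm (hint _)]
  rw [← integral_finsetSum _ fun j _ => (L (b j)).integrable_comp (hint j)]
  refine integral_eq_zero_of_ae (.of_forall fun y => ?_)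
  simp only [map_smul, ← Finset.smul_sum, Pi.zero_apply]
  rcases lt_or_ge 1 ‖y‖ with hy | hy
  · rw [radialKernel_eq_zero hy, mul_zero, zero_smul]
  · rw [← diracOp, hm.diracOp_eq_zero _ (add_smul_mem_ball ht htR hy), smul_zero]

/- Writing `y = ∑ₖ ⟪bₖ, y⟫ bₖ`, the integral is the trace of the symmetric matrix with entries
`∫ ⟪bₖ, y⟫ ρ(y) ∂ⱼh(x + ty)`, and the Clifford relations turn `diracOp b L h = 0` into the
vanishing of that trace. -/
theorem IsMonogenicOn.integral_radialKernel_smul_fderiv_eq_zero (hL : IsCliffordPair L L')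
    (hh : ContDiff ℝ 1 h) (hm : IsMonogenicOn b L h (ball x R)) (ht : 0 < t) (htR : t < R) :
    ∫ y, radialKernel y • fderiv ℝ h (x + t • y) y = 0 := by
  rw [← hL.sum_diag_eq_zero b
    (fun j k => integral_inner_mul_radialKernel_smul_fderiv_comm hh x (b k) (b j) ht.ne')
    (fun k => hm.sum_apply_integral_eq_zero hh ht.le htR (b k)),
    ← integral_finsetSum _ fun k _ => integrable_inner_mul_radialKernel_smul hh x _ _ t]
  refine integral_congr_ae (.of_forall fun y => ?_)
  change radialKernel y • fderiv ℝ h (x + t • y) y = _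
  nth_rewrite 3 [← b.sum_repr' y]
  simp only [map_sum, map_smul, Finset.smul_sum, smul_smul, mul_comm]

theorem IsMonogenicOn.integral_radialKernel_smul (hL : IsCliffordPair L L')
    (hh : ContDiff ℝ 1 h) (hm : IsMonogenicOn b L h (ball x R)) (ht : 0 ≤ t) (htR : t < R) :
    ∫ y, radialKernel y • h (x + t • y) = h x := by
  let J : ℝ → V := fun s => ∫ y, radialKernel y • h (x + s • y)
  have hJ : ∀ s, HasDerivAt J (∫ y, radialKernel y • fderiv ℝ h (x + s • y) y) s :=
    hasDerivAt_integral_smul_dilation hh contDiff_radialKernel.continuous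
      hasCompactSupport_radialKernel x
  have hJ' : ∀ s ∈ Set.Ico 0 t, HasDerivAt J 0 s := by
    rintro s ⟨hs, hst⟩
    convert hJ s using 1
    rcases hs.eq_or_lt with rfl | hs
    · simp only [zero_smul, add_zero, integral_radialKernel_smul_clm_eq_zero]
    · rw [hm.integral_radialKernel_smul_fderiv_eq_zero hL hh hs (hst.trans htR)]
  have hconst : J t = J 0 :=
    constant_of_has_deriv_right_zero (fun s _ => (hJ s).continuousAt.continuousWithinAt)
      (fun s hs => (hJ' s hs).hasDerivWithinAt) t (Set.right_mem_Icc.2 ht)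
  simpa [J, integral_smul_const, integral_radialKernel] using hconst

end MonogenicMeanValue

section Regularity

variable {ι E V : Type*} [Fintype ι] [NormedAddCommGroup E] [InnerProductSpace ℝ E]
  [NormedAddCommGroup V] [NormedSpace ℝ V] {b : OrthonormalBasis ι ℝ E}
  {L L' : E →ₗ[ℝ] V →L[ℝ] V} {h : E → V} {U : Set E} {x : E} {r R : ℝ}

theorem diracOp_fderiv_apply (hh : ContDiffAt ℝ 2 h x) (e : E) :
    diracOp b L (fun z => fderiv ℝ h z e) x = fderiv ℝ (diracOp b L h) x e := by
  have hfderiv : HasFDerivAt (fderiv ℝ h) (fderiv ℝ (fderiv ℝ h) x) x :=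
    ((hh.fderiv_right (m := 1) le_rfl).differentiableAt one_ne_zero).hasFDerivAt
  have happly : ∀ e, HasFDerivAt (fun z => fderiv ℝ h z e) ((fderiv ℝ (fderiv ℝ h) x).flip e) x :=
    fun e => by simpa using hfderiv.clm_apply (hasFDerivAt_const e x)
  have hsymm : IsSymmSndFDerivAt ℝ h x := hh.isSymmSndFDerivAt (by simp)
  have hdirac : HasFDerivAt (diracOp b L h) _ x :=
    HasFDerivAt.fun_sum fun j _ => (L (b j)).hasFDerivAt.comp x (happly (b j))
  simp only [diracOp] at hdirac ⊢
  simp [hdirac.fderiv, (happly e).fderiv, hsymm.eq _ e]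

theorem IsMonogenicOn.fderiv_apply (hh : IsMonogenicOn b L h U) (hU : IsOpen U)
    (hh2 : ContDiffOn ℝ 2 h U) (e : E) : IsMonogenicOn b L (fun z => fderiv ℝ h z e) U := by
  refine ⟨(hh2.fderiv_of_isOpen hU le_rfl).clm_apply contDiffOn_const, fun z hz => ?_⟩
  have hzero : diracOp b L h =ᶠ[𝓝 z] 0 := by
    filter_upwards [hU.mem_nhds hz] using hh.diracOp_eq_zero
  rw [diracOp_fderiv_apply (hh2.contDiffAt (hU.mem_nhds hz)), hzero.fderiv_eq]
  simp

variable [FiniteDimensional ℝ E]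

theorem exists_contDiff_eqOn_ball {n : ℕ∞} (hh : ContDiffOn ℝ n h (ball x R)) (hrR : r < R) :
    ∃ g : E → V, ContDiff ℝ n g ∧ Set.EqOn g h (ball x r) := by
  rcases le_or_gt r 0 with hr | hr
  · exact ⟨0, contDiff_const, by simp [ball_eq_empty.2 hr]⟩
  obtain ⟨r', hrr', hr'R⟩ := exists_between hrR
  let χ : ContDiffBump x := ⟨r, r', hr, hrr'⟩
  refine ⟨fun z => χ z • h z, contDiff_iff_contDiffAt.2 fun z => ?_, fun z hz => ?_⟩
  · by_cases hz : z ∈ ball x R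
    · exact χ.contDiff.contDiffAt.smul (hh.contDiffAt (isOpen_ball.mem_nhds hz))
    · have hzχ : z ∉ tsupport χ := fun hz' =>
        hz (closedBall_subset_ball hr'R (χ.tsupport_eq ▸ hz'))
      refine (contDiffAt_const (c := (0 : V))).congr_of_eventuallyEq ?_
      filter_upwards [notMem_tsupport_iff_eventuallyEq.1 hzχ] with y hy
      simp [hy]
  · simp only [χ.one_of_mem_closedBall (ball_subset_closedBall hz), one_smul]

theorem norm_integral_fderiv_radialKernel_smul_le [MeasurableSpace E] [BorelSpace E] {M t : ℝ}
    (ht : 0 ≤ t) (htR : t < R) (hM : ∀ z ∈ ball x R, ‖h z‖ ≤ M) (e : E) :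
    ‖∫ y, fderiv ℝ radialKernel y e • h (x + t • y)‖ ≤
      (∫ y : E, ‖fderiv ℝ radialKernel y‖) * M * ‖e‖ := by
  have hint : Integrable fun y : E => ‖fderiv ℝ radialKernel y‖ :=
    ((contDiff_radialKernel.continuous_fderiv (by simp)).integrable_of_hasCompactSupport
      (hasCompactSupport_radialKernel.fderiv ℝ)).norm
  rw [mul_assoc, ← integral_mul_const]
  refine norm_integral_le_of_norm_le (hint.mul_const _) (.of_forall fun y => ?_)
  rw [norm_smul]
  rcases lt_or_ge 1 ‖y‖ with hy | hy
  · have hzero : radialKernel =ᶠ[𝓝 y] 0 := by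
      filter_upwards [(isOpen_lt continuous_const continuous_norm).mem_nhds hy] with u hu
        using radialKernel_eq_zero hu
    simp [hzero.fderiv_eq]
  · calc ‖fderiv ℝ radialKernel y e‖ * ‖h (x + t • y)‖
        ≤ (‖fderiv ℝ radialKernel y‖ * ‖e‖) * M := by
          gcongr
          · exact (fderiv ℝ radialKernel y).le_opNorm e
          · exact hM _ (add_smul_mem_ball ht htR hy)
      _ = ‖fderiv ℝ radialKernel y‖ * (M * ‖e‖) := by ring

theorem contDiff_integral_radialKernel_smul [MeasurableSpace E] [BorelSpace E]
    (hh : Continuous h) {t : ℝ} (ht : t ≠ 0) :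
    ContDiff ℝ ∞ fun x => ∫ y, radialKernel y • h (x + t • y) := by
  have hconv : ContDiff ℝ ∞
      (convolution radialKernel (fun y => h (t • y)) (.lsmul ℝ ℝ) (volume : Measure E)) :=
    hasCompactSupport_radialKernel.contDiff_convolution_left _ contDiff_radialKernel
      (hh.comp (by fun_prop)).locallyIntegrable
  convert hconv.comp (contDiff_const_smul t⁻¹) using 2 with x
  rw [Function.comp_apply, convolution_def, ← integral_neg_eq_self]
  simp only [radialKernel_neg, ContinuousLinearMap.lsmul_apply, sub_eq_add_neg, smul_add, smul_neg,
    smul_inv_smul₀ ht]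

variable [CompleteSpace V]

theorem IsMonogenicOn.contDiffOn_infty (hL : IsCliffordPair L L') (hU : IsOpen U)
    (hh : IsMonogenicOn b L h U) : ContDiffOn ℝ ∞ h U := by
  borelize E
  intro a ha
  obtain ⟨R, hR, hRU⟩ := Metric.isOpen_iff.1 hU a ha
  obtain ⟨g, hg, hgh⟩ := exists_contDiff_eqOn_ball (n := 1) (r := R / 2)
    (hh.contDiffOn.mono hRU) (by linarith)
  have hgm : IsMonogenicOn b L g (ball a (R / 2)) :=
    (hh.mono ((ball_subset_ball (by linarith)).trans hRU)).congr isOpen_ball hgh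
  have hmean : ∀ x ∈ ball a (R / 4), ∫ y, radialKernel y • g (x + (R / 8) • y) = h x := by
    intro x hx
    have hxR : ball x (R / 4) ⊆ ball a (R / 2) := ball_subset_ball' (by
      rw [mem_ball] at hx; linarith)
    rw [(hgm.mono hxR).integral_radialKernel_smul hL hg (by positivity) (by linarith),
      hgh (ball_subset_ball (by linarith) hx)]
  refine ((contDiff_integral_radialKernel_smul hg.continuous (t := R / 8)
    (by positivity)).contDiffAt.congr_of_eventuallyEq ?_).contDiffWithinAt
  filter_upwards [ball_mem_nhds a (by positivity : 0 < R / 4)] with x hx using (hmean x hx).symm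

theorem exists_norm_fderiv_apply_le (b : OrthonormalBasis ι ℝ E) (hL : IsCliffordPair L L') :
    ∃ C : ℝ, 0 < C ∧ ∀ (h : E → V) (x : E) (R M : ℝ), 0 < R → IsMonogenicOn b L h (ball x R) →
      (∀ z ∈ ball x R, ‖h z‖ ≤ M) → ∀ e, ‖fderiv ℝ h x e‖ ≤ C * ‖e‖ / R * M := by
  borelize E
  set C := ∫ y : E, ‖fderiv ℝ radialKernel y‖
  have hC : 0 ≤ C := integral_nonneg fun _ => norm_nonneg _
  refine ⟨4 * (C + 1), mul_pos four_pos (hC.trans_lt (lt_add_one C)),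
    fun h x R M hR hh hM e => ?_⟩
  have hM0 : 0 ≤ M := (norm_nonneg _).trans (hM x (mem_ball_self hR))
  have hsub : ball x (R / 2) ⊆ ball x R := ball_subset_ball (by linarith)
  have hsmooth := hh.contDiffOn_infty hL isOpen_ball
  obtain ⟨g, hg, hgh⟩ := exists_contDiff_eqOn_ball (n := ⊤) (r := R / 2) hsmooth (by linarith)
  have hg1 : ContDiff ℝ 1 g := hg.of_le (by simp)
  have hg' : ContDiff ℝ 1 fun z => fderiv ℝ g z e :=
    (hg.fderiv_right (m := 1) (by norm_cast)).clm_apply contDiff_const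
  have hgm := ((hh.mono hsub).congr isOpen_ball hgh).fderiv_apply isOpen_ball
    (contDiff_infty.1 hg 2).contDiffOn e
  have hfderiv : fderiv ℝ h x e = fderiv ℝ g x e := by
    rw [(hgh.eventuallyEq_of_mem (ball_mem_nhds x (by positivity))).fderiv_eq]
  have hparts : (R / 4) • fderiv ℝ h x e =
      -∫ y, fderiv ℝ radialKernel y e • g (x + (R / 4) • y) := by
    rw [← smul_integral_smul_fderiv_dilation hg1 (contDiff_radialKernel.of_le (by simp))
      hasCompactSupport_radialKernel, hgm.integral_radialKernel_smul hL hg' (by positivity)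
      (by linarith), hfderiv]
  have hbound : R / 4 * ‖fderiv ℝ h x e‖ ≤ C * M * ‖e‖ := by
    rw [← Real.norm_of_nonneg (by positivity : 0 ≤ R / 4), ← norm_smul, hparts, norm_neg]
    exact norm_integral_fderiv_radialKernel_smul_le (by positivity) (by linarith)
      (fun z hz => hgh hz ▸ hM z (hsub hz)) e
  rw [div_mul_eq_mul_div, le_div_iff₀ hR]
  nlinarith [mul_nonneg hM0 (norm_nonneg e)]

end Regularity

section UniqueContinuation

theorem eq_zero_of_norm_iteratedDeriv_le {V : Type*} [NormedAddCommGroup V] [NormedSpace ℝ V]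
    {φ : ℝ → V} {M q : ℝ} (hφ : ∀ t ∈ Set.Icc (0 : ℝ) 1, ContDiffAt ℝ ∞ φ t) (hq : 0 ≤ q)
    (hq1 : q < 1) (hzero : ∀ k, iteratedDeriv k φ 0 = 0)
    (hbound : ∀ k, ∀ t ∈ Set.Icc (0 : ℝ) 1, ‖iteratedDeriv k φ t‖ ≤ M * q ^ k * k.factorial) :
    φ 1 = 0 := by
  have hwithin : ∀ k, ∀ t ∈ Set.Icc (0 : ℝ) 1,
      iteratedDerivWithin k φ (Set.Icc 0 1) t = iteratedDeriv k φ t := fun k t ht =>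
    iteratedDerivWithin_eq_iteratedDeriv (uniqueDiffOn_Icc one_pos)
      (contDiffAt_infty.1 (hφ t ht) k) ht
  have htaylor : ∀ k, taylorWithinEval φ k (Set.Icc 0 1) 0 1 = 0 := fun k => by
    simp [taylor_within_apply, hwithin _ 0 (by simp), hzero]
  have hle : ∀ k : ℕ, ‖φ 1‖ ≤ M * ((k + 1 : ℕ) * q ^ (k + 1)) := fun k => by
    have hremainder := taylor_mean_remainder_bound zero_le_one
      (fun t ht => (contDiffAt_infty.1 (hφ t ht) (k + 1)).contDiffWithinAt)
      (Set.right_mem_Icc.2 zero_le_one) fun t ht => hwithin (k + 1) t ht ▸ hbound (k + 1) t ht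
    rw [htaylor, sub_zero, sub_zero, one_pow, mul_one, Nat.factorial_succ] at hremainder
    refine hremainder.trans_eq ?_
    field_simp
    push_cast
    ring
  have hlim : Tendsto (fun k : ℕ => M * ((k + 1 : ℕ) * q ^ (k + 1))) atTop (𝓝 0) := by
    simpa using ((tendsto_add_atTop_iff_nat 1).2
      (tendsto_self_mul_const_pow_of_lt_one hq hq1)).const_mul M
  exact norm_le_zero_iff.1 (ge_of_tendsto' hlim hle)

theorem eventually_deriv_comp_add_smul {E V : Type*} [NormedAddCommGroup E] [NormedSpace ℝ E]
    [NormedAddCommGroup V] [NormedSpace ℝ V] {h : E → V} {U : Set E} {x : E} (hU : IsOpen U)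
    (hh : DifferentiableOn ℝ h U) (hx : x ∈ U) (u : E) :
    deriv (fun t : ℝ => h (x + t • u)) =ᶠ[𝓝 0] fun t => fderiv ℝ h (x + t • u) u := by
  have hline : ContinuousAt (fun t : ℝ => x + t • u) 0 := by fun_prop
  filter_upwards [hline.preimage_mem_nhds (by simpa using hU.mem_nhds hx)] with t ht
  have hderiv : HasDerivAt (fun t : ℝ => x + t • u) u t := by
    simpa using ((hasDerivAt_id t).smul_const u).const_add x
  exact ((hh.differentiableAt (hU.mem_nhds ht)).hasFDerivAt.comp_hasDerivAt t hderiv).deriv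

variable {ι E V : Type*} [Fintype ι] [NormedAddCommGroup E] [InnerProductSpace ℝ E]
  [NormedAddCommGroup V] [NormedSpace ℝ V] {b : OrthonormalBasis ι ℝ E}
  {L L' : E →ₗ[ℝ] V →L[ℝ] V} {h : E → V} {U : Set E}

theorem IsMonogenicOn.fderiv_eq_zero_of_eqOn_hyperplane (hL : IsCliffordPair L L') (hU : IsOpen U)
    (hh : IsMonogenicOn b L h U) {n a : E} (hn : ‖n‖ = 1)
    (hzero : ∀ z ∈ U, ⟪n, z - a⟫ = 0 → h z = 0) {z : E} (hz : z ∈ U) (hza : ⟪n, z - a⟫ = 0) :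
    fderiv ℝ h z n = 0 := by
  have htangent : ∀ e, ⟪n, e⟫ = 0 → fderiv ℝ h z e = 0 := fun e he => by
    have hline : Tendsto (fun t : ℝ => z + t • e) (𝓝 0) (𝓝 z) :=
      Continuous.tendsto' (by fun_prop) _ _ (by simp)
    have hvanish : (fun t : ℝ => h (z + t • e)) =ᶠ[𝓝 0] 0 := by
      filter_upwards [hline.eventually (hU.mem_nhds hz)] with t ht
      refine hzero _ ht ?_
      rw [add_sub_right_comm, inner_add_right, hza, inner_smul_right, he, mul_zero, add_zero]
    have hderiv := (eventually_deriv_comp_add_smul hU (hh.contDiffOn.differentiableOn (by simp))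
      hz e).self_of_nhds
    rw [hvanish.deriv_eq] at hderiv
    simpa using hderiv.symm
  have hnormal : ∀ e, fderiv ℝ h z e = ⟪n, e⟫ • fderiv ℝ h z n := fun e => by
    rw [← sub_eq_zero, ← map_smul, ← map_sub]
    exact htangent _ (by simp [inner_sub_right, inner_smul_right, hn])
  refine hL.eq_zero_of_apply_eq_zero (norm_ne_zero_iff.1 (hn ▸ one_ne_zero)) ?_
  have hD := hh.diracOp_eq_zero z hz
  simp only [diracOp, hnormal (b _), map_smul] at hD
  rw [← hD]
  generalize fderiv ℝ h z n = d
  conv_lhs => rw [← b.sum_repr' n]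
  simp [real_inner_comm n]

variable [FiniteDimensional ℝ E] [CompleteSpace V]

theorem IsMonogenicOn.iteratedDeriv_succ_line (hL : IsCliffordPair L L') (hU : IsOpen U)
    (hh : IsMonogenicOn b L h U) {x : E} (hx : x ∈ U) (u : E) (k : ℕ) :
    iteratedDeriv (k + 1) (fun t : ℝ => h (x + t • u)) 0 =
      iteratedDeriv k (fun t : ℝ => fderiv ℝ h (x + t • u) u) 0 := by
  rw [iteratedDeriv_succ', (eventually_deriv_comp_add_smul hU
    ((hh.contDiffOn_infty hL hU).differentiableOn (by simp)) hx u).iteratedDeriv_eq]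

theorem IsMonogenicOn.fderiv_apply_of_isCliffordPair (hL : IsCliffordPair L L') (hU : IsOpen U)
    (hh : IsMonogenicOn b L h U) (u : E) : IsMonogenicOn b L (fun z => fderiv ℝ h z u) U :=
  hh.fderiv_apply hU (_root_.contDiffOn_infty.1 (hh.contDiffOn_infty hL hU) 2) u

theorem exists_norm_iteratedDeriv_le_pow (b : OrthonormalBasis ι ℝ E) (hL : IsCliffordPair L L') :
    ∃ C : ℝ, 0 < C ∧ ∀ (k : ℕ) (h : E → V) (x u : E) (δ M : ℝ), 0 < δ →
      IsMonogenicOn b L h (ball x ((k + 1) * δ)) → (∀ z ∈ ball x ((k + 1) * δ), ‖h z‖ ≤ M) →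
      ‖iteratedDeriv k (fun t : ℝ => h (x + t • u)) 0‖ ≤ (C * ‖u‖ / δ) ^ k * M := by
  obtain ⟨C, hC, hgrad⟩ := exists_norm_fderiv_apply_le b hL
  refine ⟨C, hC, fun k => ?_⟩
  induction k with
  | zero =>
    intro h x u δ M hδ _ hM
    simpa using hM x (mem_ball_self (by simpa using hδ))
  | succ k ih =>
    intro h x u δ M hδ hh hM
    push_cast at hh hM
    have hsub : ∀ z ∈ ball x ((k + 1) * δ), ball z δ ⊆ ball x ((k + 1 + 1) * δ) := fun z hz =>
      ball_subset_ball' (by rw [mem_ball] at hz; linarith)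
    rw [hh.iteratedDeriv_succ_line hL isOpen_ball (mem_ball_self (by positivity)), pow_succ,
      mul_assoc]
    exact ih _ x u δ _ hδ
      ((hh.fderiv_apply_of_isCliffordPair hL isOpen_ball u).mono
        (ball_subset_ball (by gcongr; linarith)))
      fun z hz => hgrad h z δ M hδ (hh.mono (hsub z hz)) (fun y hy => hM y (hsub z hz hy)) u

theorem exists_norm_iteratedDeriv_le (b : OrthonormalBasis ι ℝ E) (hL : IsCliffordPair L L') :
    ∃ C : ℝ, 0 < C ∧ ∀ (h : E → V) (x u : E) (R M : ℝ), 0 < R → IsMonogenicOn b L h (ball x R) →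
      (∀ z ∈ ball x R, ‖h z‖ ≤ M) → ∀ k : ℕ,
      ‖iteratedDeriv k (fun t : ℝ => h (x + t • u)) 0‖ ≤
        Real.exp 1 * M * (C * ‖u‖ / R) ^ k * k.factorial := by
  obtain ⟨C, hC, hpow⟩ := exists_norm_iteratedDeriv_le_pow b hL
  refine ⟨Real.exp 1 * C, by positivity, fun h x u R M hR hh hM k => ?_⟩
  have hM0 : 0 ≤ M := (norm_nonneg _).trans (hM x (mem_ball_self hR))
  have hδ : (k + 1) * (R / (k + 1)) = R := by field_simp
  have hexp : ((k : ℝ) + 1) ^ k ≤ Real.exp 1 * Real.exp 1 ^ k * k.factorial := by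
    have hk := Real.pow_div_factorial_le_exp (x := k + 1) (by positivity) k
    rwa [div_le_iff₀ (by positivity), add_comm, Real.exp_add, ← Real.exp_one_pow, add_comm] at hk
  calc ‖iteratedDeriv k (fun t : ℝ => h (x + t • u)) 0‖
      ≤ (C * ‖u‖ / (R / (k + 1))) ^ k * M :=
        hpow k h x u _ M (by positivity) (by rwa [hδ]) (by rwa [hδ])
    _ = (k + 1) ^ k * ((C * ‖u‖ / R) ^ k * M) := by
        rw [← mul_assoc, ← mul_pow]
        congr 2
        field_simp
    _ ≤ Real.exp 1 * Real.exp 1 ^ k * k.factorial * ((C * ‖u‖ / R) ^ k * M) := by gcongr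
    _ = Real.exp 1 * M * (Real.exp 1 * C * ‖u‖ / R) ^ k * k.factorial := by
        rw [mul_assoc (Real.exp 1) C, mul_div_assoc (Real.exp 1), mul_pow]
        ring

theorem exists_eq_zero_of_iteratedDeriv_eq_zero (b : OrthonormalBasis ι ℝ E)
    (hL : IsCliffordPair L L') :
    ∃ c : ℝ, 0 < c ∧ ∀ (h : E → V) (x u : E) (R : ℝ), 0 < R → IsMonogenicOn b L h (ball x R) →
      ‖u‖ < c * R → (∀ k, iteratedDeriv k (fun t : ℝ => h (x + t • u)) 0 = 0) → h (x + u) = 0 := by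
  obtain ⟨C, hC, hbound⟩ := exists_norm_iteratedDeriv_le b hL
  refine ⟨min (1 / 4) (1 / (4 * C)), by positivity, fun h x u R hR hh hu hzero => ?_⟩
  have huR : ‖u‖ < R / 4 := hu.trans_le (by nlinarith [min_le_left (1 / 4) (1 / (4 * C))])
  have hq : C * ‖u‖ / (R / 4) < 1 := by
    have huC : ‖u‖ < 1 / (4 * C) * R := hu.trans_le (by gcongr; exact min_le_right _ _)
    field_simp at huC ⊢
    linarith
  obtain ⟨M, hM⟩ := (isCompact_closedBall x (R / 2)).exists_bound_of_continuousOn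
    (hh.contDiffOn.continuousOn.mono (closedBall_subset_ball (by linarith)))
  have hline : ∀ t ∈ Set.Icc (0 : ℝ) 1, ball (x + t • u) (R / 4) ⊆ closedBall x (R / 2) := by
    refine fun t ht => (ball_subset_ball' (ε₂ := R / 2) ?_).trans ball_subset_closedBall
    rw [dist_self_add_left, norm_smul, Real.norm_of_nonneg ht.1]
    nlinarith [ht.2, norm_nonneg u]
  have hsub : closedBall x (R / 2) ⊆ ball x R := closedBall_subset_ball (by linarith)
  have hshift : ∀ (k : ℕ) (t : ℝ), iteratedDeriv k (fun t : ℝ => h (x + t • u)) t =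
      iteratedDeriv k (fun s : ℝ => h (x + t • u + s • u)) 0 := fun k t => by
    simpa [add_smul, add_assoc] using
      (congrFun (iteratedDeriv_comp_const_add k (fun t : ℝ => h (x + t • u)) t) 0).symm
  have hzero1 := eq_zero_of_norm_iteratedDeriv_le (φ := fun t : ℝ => h (x + t • u))
    (M := Real.exp 1 * M) (fun t ht => ?_) (by positivity) hq hzero fun k t ht => ?_
  · simpa using hzero1
  · have hball : ball x R ∈ 𝓝 (x + t • u) :=
      isOpen_ball.mem_nhds (hsub (hline t ht (mem_ball_self (by positivity))))
    exact ((hh.contDiffOn_infty hL isOpen_ball).contDiffAt hball).comp t (by fun_prop)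
  · rw [hshift]
    exact hbound h _ u _ M (by positivity) (hh.mono ((hline t ht).trans hsub))
      (fun z hz => hM z (hline t ht hz)) k

theorem IsMonogenicOn.eqOn_zero_of_preconnected_of_eventuallyEq_zero (hL : IsCliffordPair L L')
    (hU : IsOpen U) (hUc : IsPreconnected U) (hh : IsMonogenicOn b L h U) {a : E} (ha : a ∈ U)
    (hzero : h =ᶠ[𝓝 a] 0) : Set.EqOn h 0 U := by
  obtain ⟨c, hc, hvanish⟩ := exists_eq_zero_of_iteratedDeriv_eq_zero b hL
  suffices hsub : U ⊆ {x | h =ᶠ[𝓝 x] 0} from fun x hx => (hsub hx).self_of_nhds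
  refine hUc.subset_of_closure_inter_subset isOpen_setOfPred_eventually_nhds ⟨a, ha, hzero⟩ ?_
  rintro x ⟨hxc, hxU⟩
  obtain ⟨R, hR, hRU⟩ := Metric.isOpen_iff.1 hU x hxU
  obtain ⟨x', hx', hdist⟩ := Metric.mem_closure_iff.1 hxc (min (R / 2) (c * (R / 2)))
    (by positivity)
  obtain ⟨hdistR, hdistc⟩ := lt_min_iff.1 hdist
  have hball : ball x' (R / 2) ⊆ U :=
    (ball_subset_ball' (by rw [dist_comm]; linarith)).trans hRU
  filter_upwards [isOpen_ball.mem_nhds (mem_ball.2 hdistc)] with z hz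
  have hline : Tendsto (fun t : ℝ => x' + t • (z - x')) (𝓝 0) (𝓝 x') :=
    Continuous.tendsto' (by fun_prop) _ _ (by simp)
  have hderiv : ∀ k, iteratedDeriv k (fun t : ℝ => h (x' + t • (z - x'))) 0 = 0 := fun k => by
    have hlocal : (fun t : ℝ => h (x' + t • (z - x'))) =ᶠ[𝓝 0] 0 := hline.eventually hx'
    simp [hlocal.iteratedDeriv_eq]
  simpa using hvanish h x' (z - x') _ (by positivity) (hh.mono hball)
    (by rwa [← dist_eq_norm]) hderiv

theorem IsMonogenicOn.iteratedDeriv_eq_zero_of_eqOn_hyperplane (hL : IsCliffordPair L L')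
    (hU : IsOpen U) {n a : E} (hn : ‖n‖ = 1) (s : ℝ) (k : ℕ) (hh : IsMonogenicOn b L h U)
    (hzero : ∀ z ∈ U, ⟪n, z - a⟫ = 0 → h z = 0) {z : E} (hz : z ∈ U) (hza : ⟪n, z - a⟫ = 0) :
    iteratedDeriv k (fun t : ℝ => h (z + t • s • n)) 0 = 0 := by
  induction k generalizing h with
  | zero => simpa using hzero z hz hza
  | succ k ih =>
    rw [hh.iteratedDeriv_succ_line hL hU hz]
    refine ih (hh.fderiv_apply_of_isCliffordPair hL hU _) fun z' hz' hza' => ?_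
    rw [map_smul, hh.fderiv_eq_zero_of_eqOn_hyperplane hL hU hn hzero hz' hza', smul_zero]

theorem IsMonogenicOn.eqOn_zero_of_eqOn_hyperplane (hL : IsCliffordPair L L') (hU : IsOpen U)
    (hUc : IsPreconnected U) (hh : IsMonogenicOn b L h U) {n a : E} (hn : ‖n‖ = 1) (ha : a ∈ U)
    (hzero : ∀ z ∈ U, ⟪n, z - a⟫ = 0 → h z = 0) : Set.EqOn h 0 U := by
  refine hh.eqOn_zero_of_preconnected_of_eventuallyEq_zero hL hU hUc ha ?_
  obtain ⟨c, hc, hvanish⟩ := exists_eq_zero_of_iteratedDeriv_eq_zero b hL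
  obtain ⟨R, hR, hRU⟩ := Metric.isOpen_iff.1 hU a ha
  have hfoot : Tendsto (fun z => z - ⟪n, z - a⟫ • n) (𝓝 a) (𝓝 a) :=
    Continuous.tendsto' (by fun_prop) _ _ (by simp)
  have hnormal : Tendsto (fun z => ‖⟪n, z - a⟫ • n‖) (𝓝 a) (𝓝 0) :=
    Continuous.tendsto' (by fun_prop) _ _ (by simp)
  filter_upwards [hfoot.eventually (ball_mem_nhds a (half_pos hR)),
    hnormal.eventually_lt_const (mul_pos hc (half_pos hR))] with z hz₀ hz
  have hball : ball (z - ⟪n, z - a⟫ • n) (R / 2) ⊆ U :=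
    (ball_subset_ball' (by linarith)).trans hRU
  have hfoot0 : ⟪n, z - ⟪n, z - a⟫ • n - a⟫ = 0 := by
    simp [sub_right_comm, inner_sub_right, inner_smul_right, hn]
  simpa using hvanish h _ _ _ (half_pos hR) (hh.mono hball) hz fun k =>
    hh.iteratedDeriv_eq_zero_of_eqOn_hyperplane hL hU hn _ k hzero
      (hball (mem_ball_self (half_pos hR))) hfoot0

end UniqueContinuation

section SliceSymbol

variable {ι E V : Type*} [Fintype ι] [NormedAddCommGroup E] [InnerProductSpace ℝ E]
  [NormedAddCommGroup V] [NormedSpace ℝ V] {b : OrthonormalBasis ι ℝ E}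
  {L L' M M' : E →ₗ[ℝ] V →L[ℝ] V} {n : E} {F G : E → V} {U : Set E}

theorem IsMonogenicOn.clm_comp (hG : IsMonogenicOn b M G U) (hU : IsOpen U) {T : V →L[ℝ] V}
    (hT : ∀ e x, L e (T x) = T (M e x)) : IsMonogenicOn b L (fun z => T (G z)) U := by
  refine ⟨T.contDiff.comp_contDiffOn hG.contDiffOn, fun z hz => ?_⟩
  have hGz := (hG.contDiffOn.contDiffAt (hU.mem_nhds hz)).differentiableAt one_ne_zero
  have hD := congrArg T (hG.diracOp_eq_zero z hz)
  rw [map_zero, diracOp, map_sum] at hD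
  have hfderiv : fderiv ℝ (fun z => T (G z)) z = T ∘L fderiv ℝ G z :=
    (T.hasFDerivAt.comp z hGz.hasFDerivAt).fderiv
  simp only [diracOp, hfderiv, ContinuousLinearMap.comp_apply, hT, hD]

theorem diracOp_comp_linearIsometryEquiv (σ : E ≃ₗᵢ[ℝ] E) (z : E) :
    diracOp b (M ∘ₗ σ.toLinearMap) (G ∘ σ) z = diracOp b M G (σ z) := by
  have := b.toBasis.finiteDimensional_of_finite
  let B : E →ₗ[ℝ] E →ₗ[ℝ] V := LinearMap.mk₂ ℝ (fun e e' => M e (fderiv ℝ G (σ z) e'))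
    (by simp) (by simp) (by simp) (by simp)
  have hfderiv : fderiv ℝ (G ∘ σ) z = fderiv ℝ G (σ z) ∘L (σ.toContinuousLinearEquiv : E →L[ℝ] E) :=
    σ.toContinuousLinearEquiv.comp_right_fderiv
  have htensor := congrArg (TensorProduct.lift B)
    ((InnerProductSpace.canonicalCovariantTensor_eq_sum E (b.map σ)).symm.trans
      (InnerProductSpace.canonicalCovariantTensor_eq_sum E b))
  simpa [B, diracOp, hfderiv] using htensor

theorem IsMonogenicOn.comp_linearIsometryEquiv (hG : IsMonogenicOn b M G U) (σ : E ≃ₗᵢ[ℝ] E) :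
    IsMonogenicOn b (M ∘ₗ σ.toLinearMap) (G ∘ σ) (σ ⁻¹' U) :=
  ⟨hG.contDiffOn.comp σ.contDiff.contDiffOn (Set.mapsTo_preimage _ _), fun z hz => by
    rw [diracOp_comp_linearIsometryEquiv, hG.diracOp_eq_zero _ hz]⟩

/-- A Clifford symbol for which `n` is imaginary, so that `L n` is a complex structure when
`‖n‖ = 1`. On the slice through `ω` the symbol is `x_p + r n ↦ (x_p + r ω) * ·`. -/
structure IsSliceSymbol (n : E) (L L' : E →ₗ[ℝ] V →L[ℝ] V) : Prop where
  isCliffordPair : IsCliffordPair L L'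
  conj_apply : L' n = -L n

theorem IsSliceSymbol.apply_apply (hL : IsSliceSymbol n L L') (hn : ‖n‖ = 1) (x : V) :
    L n (L n x) = -x := by
  rw [← neg_eq_iff_eq_neg, ← neg_apply, ← hL.conj_apply, hL.isCliffordPair, hn, one_pow, one_smul]

theorem IsSliceSymbol.conj_apply_apply (hL : IsSliceSymbol n L L') {e : E} (he : ⟪n, e⟫ = 0)
    (x : V) : L' e (L n x) = L n (L e x) := by
  have h := hL.isCliffordPair.add_swap n e x
  rwa [he, mul_zero, zero_smul, hL.conj_apply, neg_apply, neg_add_eq_zero, eq_comm] at h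

theorem IsSliceSymbol.apply_apply_comm (hL : IsSliceSymbol n L L') (hn : ‖n‖ = 1) {e : E}
    (he : ⟪n, e⟫ = 0) (x : V) : L e (L n x) = L n (L' e x) := by
  have h := congrArg (L n) (hL.conj_apply_apply he (L n x))
  rw [hL.apply_apply hn, hL.apply_apply hn, map_neg, map_neg, neg_inj] at h
  exact h.symm

theorem IsSliceSymbol.comp_reflection (hL : IsSliceSymbol n L L') :
    IsSliceSymbol n (L ∘ₗ (ℝ ∙ n)ᗮ.reflection.toLinearMap)
      (L' ∘ₗ (ℝ ∙ n)ᗮ.reflection.toLinearMap) :=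
  ⟨fun e x => by simpa using hL.isCliffordPair ((ℝ ∙ n)ᗮ.reflection e) x, by
    simp [Submodule.reflection_orthogonalComplement_singleton_eq_neg, hL.conj_apply]⟩

/-- The operator `½(1 - JK)`. It satisfies `J T = T K` when `J² = K² = -1`, hence carries solutions
of the equation with imaginary unit `K` to solutions of the one with `J`. -/
noncomputable def sliceIntertwiner (J K : V →L[ℝ] V) : V →L[ℝ] V :=
  (2 : ℝ)⁻¹ • (1 - J ∘L K)

theorem sliceIntertwiner_apply (J K : V →L[ℝ] V) (x : V) :
    sliceIntertwiner J K x = (2 : ℝ)⁻¹ • (x - J (K x)) :=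
  rfl

theorem IsSliceSymbol.apply_sliceIntertwiner (hL : IsSliceSymbol n L L')
    (hM : IsSliceSymbol n M M') (hn : ‖n‖ = 1) (hLM : ∀ e, ⟪n, e⟫ = 0 → L e = M e)
    (hLM' : ∀ e, ⟪n, e⟫ = 0 → L' e = M' e) (e : E) (x : V) :
    L e (sliceIntertwiner (L n) (M n) x) = sliceIntertwiner (L n) (M n) (M e x) := by
  have hnormal : L n (sliceIntertwiner (L n) (M n) x) =
      sliceIntertwiner (L n) (M n) (M n x) := by
    simp only [sliceIntertwiner_apply, map_smul, map_sub, hL.apply_apply hn, hM.apply_apply hn,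
      map_neg, sub_neg_eq_add, add_comm]
  have htangent : ∀ e, ⟪n, e⟫ = 0 → L e (sliceIntertwiner (L n) (M n) x) =
      sliceIntertwiner (L n) (M n) (M e x) := fun e he => by
    have hcomm : M e (L n (M n x)) = L n (M n (M e x)) := by
      rw [← hLM e he, hL.apply_apply_comm hn he, hLM' e he, hM.conj_apply_apply he, hLM e he]
    simp only [sliceIntertwiner_apply, map_smul, map_sub, hLM e he, hcomm]
  have hdecomp : e = (e - ⟪n, e⟫ • n) + ⟪n, e⟫ • n := (sub_add_cancel _ _).symm
  rw [hdecomp]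
  simp only [map_add, map_smul, add_apply, smul_apply, hnormal]
  rw [htangent _ (by simp [inner_sub_right, inner_smul_right, hn])]

variable [FiniteDimensional ℝ E] [CompleteSpace V]

theorem IsMonogenicOn.eq_sliceIntertwiner_add (hL : IsSliceSymbol n L L')
    (hM : IsSliceSymbol n M M') (hn : ‖n‖ = 1) (hLM : ∀ e, ⟪n, e⟫ = 0 → L e = M e)
    (hLM' : ∀ e, ⟪n, e⟫ = 0 → L' e = M' e) (hU : IsOpen U) (hUc : IsPreconnected U)
    (hUσ : Set.MapsTo (ℝ ∙ n)ᗮ.reflection U U) {a : E} (ha : a ∈ U) (hna : ⟪n, a⟫ = 0)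
    (hF : IsMonogenicOn b L F U) (hG : IsMonogenicOn b M G U)
    (hFG : ∀ z ∈ U, ⟪n, z⟫ = 0 → F z = G z) {z : E} (hz : z ∈ U) :
    F z = sliceIntertwiner (L n) (M n) (G z) +
      sliceIntertwiner (L n) (-M n) (G ((ℝ ∙ n)ᗮ.reflection z)) := by
  have hfix : ∀ e, ⟪n, e⟫ = 0 → (ℝ ∙ n)ᗮ.reflection e = e := fun e he =>
    Submodule.reflection_mem_subspace_eq_self <|
      Submodule.mem_orthogonal_singleton_iff_inner_right.2 he
  have hG₁ := hG.clm_comp hU (hL.apply_sliceIntertwiner hM hn hLM hLM')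
  have hG₂ := ((hG.comp_linearIsometryEquiv (ℝ ∙ n)ᗮ.reflection).mono hUσ).clm_comp hU
    (hL.apply_sliceIntertwiner hM.comp_reflection hn (fun e he => by simp [hfix e he, hLM e he])
      fun e he => by simp [hfix e he, hLM' e he])
  have hzero := ((hF.sub hG₁ hU).sub hG₂ hU).eqOn_zero_of_eqOn_hyperplane hL.isCliffordPair hU hUc
    hn ha (fun y hy hya => ?_) hz
  · rw [← sub_eq_zero, ← sub_sub]
    simpa [Submodule.reflection_orthogonalComplement_singleton_eq_neg] using hzero
  · have hny : ⟪n, y⟫ = 0 := by rwa [inner_sub_right, hna, sub_zero] at hya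
    simp only [Pi.sub_apply, Function.comp_apply, hfix y hny, hFG y hy hny, sliceIntertwiner_apply,
      LinearMap.comp_apply, LinearEquiv.coe_coe, LinearIsometryEquiv.coe_toLinearEquiv,
      Submodule.reflection_orthogonalComplement_singleton_eq_neg, map_neg, neg_apply,
      sub_neg_eq_add, smul_add]
    module

theorem IsMonogenicOn.representation_formula (hL : IsSliceSymbol n L L')
    (hM : IsSliceSymbol n M M') (hn : ‖n‖ = 1) (hLM : ∀ e, ⟪n, e⟫ = 0 → L e = M e)
    (hLM' : ∀ e, ⟪n, e⟫ = 0 → L' e = M' e) (hU : IsOpen U) (hUc : IsPreconnected U)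
    (hUσ : Set.MapsTo (ℝ ∙ n)ᗮ.reflection U U) {a : E} (ha : a ∈ U) (hna : ⟪n, a⟫ = 0)
    (hF : IsMonogenicOn b L F U) (hG : IsMonogenicOn b M G U)
    (hFG : ∀ z ∈ U, ⟪n, z⟫ = 0 → F z = G z) {z : E} (hz : z ∈ U) :
    let z' := (ℝ ∙ n)ᗮ.reflection z
    F z = (2 : ℝ)⁻¹ • (G z + G z') + (2 : ℝ)⁻¹ • L n (M n (G z' - G z)) ∧
      (2 : ℝ)⁻¹ • (F z + F z') = (2 : ℝ)⁻¹ • (G z + G z') ∧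
      (2 : ℝ)⁻¹ • L n (F z' - F z) = (2 : ℝ)⁻¹ • M n (G z' - G z) := by
  have hformula : ∀ z ∈ U, F z = _ := fun z hz =>
    hF.eq_sliceIntertwiner_add hL hM hn hLM hLM' hU hUc hUσ ha hna hG hFG hz
  intro z'
  have hFz := hformula z hz
  have hFz' := hformula z' (hUσ hz)
  rw [Submodule.reflection_reflection] at hFz'
  simp only [sliceIntertwiner_apply, neg_apply, map_neg] at hFz hFz'
  refine ⟨?_, ?_, ?_⟩
  · rw [hFz]
    simp only [map_sub]
    module
  · rw [hFz, hFz']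
    module
  · rw [hFz, hFz']
    simp only [map_sub, map_add, map_smul, map_neg, hL.apply_apply hn]
    module

end SliceSymbol

section AltStarAlg

variable {conj : A → A} {v : ℕ → A} {m p : ℕ} {w : Fin (m + 1) → ℝ}

/-- Left multiplication of `A` as a linear family of continuous endomorphisms. -/
noncomputable def IsAltStarAlg.mulLeft (H : IsAltStarAlg A conj) : A →ₗ[ℝ] A →L[ℝ] A :=
  have := H.finDim
  (LinearMap.toContinuousLinearMap : (A →ₗ[ℝ] A) ≃ₗ[ℝ] A →L[ℝ] A).toLinearMap ∘ₗ
    LinearMap.mk₂ ℝ (· * ·) H.add_mul' H.smul_mul' H.mul_add' H.mul_smul'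

/-- The anti-involution of `A` as a linear map. -/
def IsAltStarAlg.conjₗ (H : IsAltStarAlg A conj) : A →ₗ[ℝ] A where
  toFun := conj
  map_add' := H.conj_add
  map_smul' := H.conj_smul

theorem IsAltStarAlg.mulLeft_apply (H : IsAltStarAlg A conj) (a b : A) : H.mulLeft a b = a * b :=
  rfl

theorem IsAltStarAlg.conjₗ_apply (H : IsAltStarAlg A conj) (a : A) : H.conjₗ a = conj a :=
  rfl

theorem IsAltStarAlg.neg_mul (H : IsAltStarAlg A conj) (a b : A) : -a * b = -(a * b) := by
  simp only [← H.mulLeft_apply, map_neg, neg_apply]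

theorem IsAltStarAlg.mul_neg (H : IsAltStarAlg A conj) (a b : A) : a * -b = -(a * b) := by
  simp only [← H.mulLeft_apply, map_neg]

theorem IsAltStarAlg.one_ne_zero (H : IsAltStarAlg A conj) : (1 : A) ≠ 0 := by
  intro h
  have hzero : ∀ a : A, a = 0 := fun a => by
    rw [← H.mul_one' a, h, ← H.mulLeft_apply, map_zero]
  have : Subsingleton A := ⟨fun a b => (hzero a).trans (hzero b).symm⟩
  exact absurd H.one_lt_finrank (by simp [Module.finrank_zero_of_subsingleton])

theorem IsAltStarAlg.conj_mul_mul (H : IsAltStarAlg A conj) {a : A} {t : ℝ}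
    (ha : a + conj a = t • 1) (x : A) : conj a * (a * x) = a * conj a * x := by
  rw [← eq_sub_iff_add_eq'] at ha
  simp only [ha, ← H.mulLeft_apply, map_sub, map_smul, sub_apply, smul_apply]
  simp only [H.mulLeft_apply, H.one_mul', H.mul_one', H.alt_left]

theorem emb_eq_linearCombination {V : Type*} [NormedAddCommGroup V] [NormedSpace ℝ V] (v : ℕ → V)
    (m : ℕ) (x : Fin (m + 1) → ℝ) :
    emb v m x = Fintype.linearCombination ℝ (fun i : Fin (m + 1) => v i) x :=
  rfl

theorem IsHypBasis.mul_conj_add_mul_conj (H : IsAltStarAlg A conj) (hv : IsHypBasis A conj v m)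
    (s t : Fin (m + 1)) :
    v s * conj (v t) + v t * conj (v s) = (if s = t then 2 else 0 : ℝ) • (1 : A) := by
  have hconj : ∀ s, 1 ≤ s → s ≤ m → conj (v s) = -v s := fun s hs hsm =>
    eq_neg_of_add_eq_zero_right (hv.trace_zero s hs hsm)
  have hzero : ∀ t : Fin (m + 1), v 0 * conj (v t) + v t * conj (v 0) =
      (if 0 = t then 2 else 0 : ℝ) • (1 : A) := fun t => by
    rw [hv.v_zero, H.conj_one, H.one_mul', H.mul_one']
    rcases eq_or_ne t 0 with rfl | ht
    · simp [hv.v_zero, H.conj_one, two_smul]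
    · rw [if_neg ht.symm, zero_smul, add_comm,
        hv.trace_zero t (Nat.one_le_iff_ne_zero.2 (Fin.val_ne_zero_iff.2 ht)) (by omega)]
  rcases eq_or_ne s 0 with rfl | hs
  · exact hzero t
  rcases eq_or_ne t 0 with rfl | ht
  · simpa only [add_comm, eq_comm, Fin.val_zero] using hzero s
  have hs1 : 1 ≤ (s : ℕ) := Nat.one_le_iff_ne_zero.2 (Fin.val_ne_zero_iff.2 hs)
  have ht1 : 1 ≤ (t : ℕ) := Nat.one_le_iff_ne_zero.2 (Fin.val_ne_zero_iff.2 ht)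
  rcases eq_or_ne s t with rfl | hst
  · rw [hv.norm_one s hs1 (by omega), if_pos rfl, two_smul]
  · rw [hconj t ht1 (by omega), hconj s hs1 (by omega), H.mul_neg, H.mul_neg, if_neg hst,
      hv.anticomm s t hs1 (by omega) ht1 (by omega) (Fin.val_ne_of_ne hst)]
    simp

theorem IsHypBasis.emb_mul_conj_emb (H : IsAltStarAlg A conj) (hv : IsHypBasis A conj v m)
    (x : Fin (m + 1) → ℝ) : emb v m x * conj (emb v m x) = (∑ s, x s ^ 2) • (1 : A) := by
  have hexpand : emb v m x * conj (emb v m x) =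
      ∑ s, ∑ t, (x s * x t) • (v t * conj (v s)) := by
    simp only [emb, ← H.mulLeft_apply, ← H.conjₗ_apply, map_sum, map_smul, sum_apply, smul_apply,
      Finset.smul_sum, smul_smul]
  have hswap : ∑ s, ∑ t, (x s * x t) • (v t * conj (v s)) =
      ∑ s, ∑ t, (x s * x t) • (v s * conj (v t)) := by
    rw [Finset.sum_comm]
    simp only [mul_comm]
  have htwo : (2 : ℝ) • (emb v m x * conj (emb v m x)) = (2 : ℝ) • (∑ s, x s ^ 2) • (1 : A) := by
    rw [two_smul, hexpand]
    nth_rewrite 2 [hswap]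
    simp only [← Finset.sum_add_distrib, ← smul_add, hv.mul_conj_add_mul_conj H]
    simp [smul_smul, ← Finset.sum_smul, Finset.mul_sum, pow_two, mul_comm]
  exact smul_right_injective A two_ne_zero htwo

theorem IsHypBasis.conj_emb_mul_emb_mul (H : IsAltStarAlg A conj) (hv : IsHypBasis A conj v m)
    (x : Fin (m + 1) → ℝ) (a : A) :
    conj (emb v m x) * (emb v m x * a) = (∑ s, x s ^ 2) • a := by
  have hspan : emb v m x ∈ Submodule.span ℝ (Set.range fun i : Fin (m + 1) => v i) :=
    Fintype.range_linearCombination ℝ (fun i : Fin (m + 1) => v i) ▸ ⟨x, rfl⟩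
  obtain ⟨t, -, ht, -⟩ := hv.mem_cone _ hspan
  rw [H.conj_mul_mul ht, hv.emb_mul_conj_emb H, H.smul_mul', H.one_mul']

theorem IsHypBasis.conj_emb_of_mem_Sph (H : IsAltStarAlg A conj) (hv : IsHypBasis A conj v m)
    (hw : w ∈ Sph v m p) : conj (emb v m w) = -emb v m w := by
  simp only [emb, ← H.conjₗ_apply, map_sum, map_smul, ← Finset.sum_neg_distrib, ← smul_neg]
  refine Finset.sum_congr rfl fun s _ => ?_
  rcases le_or_gt (s : ℕ) p with hs | hs
  · simp only [hw.1 s hs, zero_smul]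
  · rw [H.conjₗ_apply, eq_neg_of_add_eq_zero_right (hv.trace_zero s (by omega) (by omega))]

theorem IsHypBasis.sum_sq_of_mem_Sph (H : IsAltStarAlg A conj) (hv : IsHypBasis A conj v m)
    (hw : w ∈ Sph v m p) : ∑ s, w s ^ 2 = 1 := by
  have h := hv.emb_mul_conj_emb H w
  rw [hv.conj_emb_of_mem_Sph H hw, H.mul_neg, hw.2, neg_neg] at h
  exact smul_left_injective ℝ H.one_ne_zero (by simpa using h.symm)

theorem neg_mem_Sph (H : IsAltStarAlg A conj) (hw : w ∈ Sph v m p) : -w ∈ Sph v m p := by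
  refine ⟨fun s hs => by simp [hw.1 s hs], ?_⟩
  rw [emb_eq_linearCombination, map_neg, H.neg_mul, H.mul_neg, neg_neg]
  exact hw.2

end AltStarAlg

section Slice

variable {conj : A → A} {v : ℕ → A} {m p : ℕ} {w η : Fin (m + 1) → ℝ} {y : Fin (p + 1) → ℝ}
  {r : ℝ} {Ω : Set (Fin (m + 1) → ℝ)} {f : (Fin (m + 1) → ℝ) → A}

theorem xppart_pt (hw : w ∈ Sph v m p) : xppart m p (pt m p w y r) = injP m p y := by
  ext s
  simp only [xppart, pt, injP, Pi.add_apply, Pi.smul_apply, smul_eq_mul]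
  grind [hw.1 s]

theorem xqpart_pt (hw : w ∈ Sph v m p) : xqpart m p (pt m p w y r) = r • w := by
  ext s
  simp only [xqpart, pt, injP, Pi.add_apply, Pi.smul_apply, smul_eq_mul]
  grind [hw.1 s]

theorem rad_pt (H : IsAltStarAlg A conj) (hv : IsHypBasis A conj v m) (hw : w ∈ Sph v m p) :
    rad m p (pt m p w y r) = |r| := by
  simp only [rad, xqpart_pt hw, Pi.smul_apply, smul_eq_mul, mul_pow, ← Finset.mul_sum,
    hv.sum_sq_of_mem_Sph H hw, mul_one, Real.sqrt_sq_eq_abs]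

theorem pt_neg_left (m p : ℕ) (w : Fin (m + 1) → ℝ) (y : Fin (p + 1) → ℝ) (r : ℝ) :
    pt m p (-w) y r = pt m p w y (-r) := by
  simp only [pt, smul_neg, neg_smul]

theorem PSym.pt_mem (H : IsAltStarAlg A conj) (hv : IsHypBasis A conj v m) (hΩ : PSym v m p Ω)
    (hw : w ∈ Sph v m p) (hη : η ∈ Sph v m p) (h : pt m p w y r ∈ Ω) : pt m p η y r ∈ Ω := by
  have hmem : ∀ ζ ∈ Sph v m p, injP m p y + |r| • ζ ∈ Ω := fun ζ hζ => by
    simpa only [xppart_pt hw, rad_pt H hv hw] using hΩ _ h ζ hζ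
  rcases abs_choice r with hr | hr
  · simpa only [pt, hr] using hmem η hη
  · simpa only [pt, hr, smul_neg, neg_smul, neg_neg] using hmem (-η) (neg_mem_Sph H hη)

theorem PSym.sliceSet_eq (H : IsAltStarAlg A conj) (hv : IsHypBasis A conj v m)
    (hΩ : PSym v m p Ω) (hw : w ∈ Sph v m p) (hη : η ∈ Sph v m p) :
    sliceSet m p Ω w = sliceSet m p Ω η :=
  Set.ext fun _ => ⟨hΩ.pt_mem H hv hw hη, hΩ.pt_mem H hv hη hw⟩

/-- `ℝ^{p+2} = ℝ^{p+1} × ℝ` with its Euclidean norm. -/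
abbrev SliceSpace (p : ℕ) : Type := WithLp 2 (EuclideanSpace ℝ (Fin (p + 1)) × ℝ)

/-- The standard orthonormal basis of `SliceSpace p`. -/
noncomputable def sliceBasis (p : ℕ) :
    OrthonormalBasis (Fin (p + 1) ⊕ Unit) ℝ (SliceSpace p) :=
  (EuclideanSpace.basisFun (Fin (p + 1)) ℝ).prod (.singleton Unit ℝ)

/-- The unit vector of `SliceSpace p` in the direction of `r`. -/
noncomputable def sliceNormal (p : ℕ) : SliceSpace p :=
  WithLp.toLp 2 (0, 1)

/-- The identification of `SliceSpace p` with the domain of the slice functions, whose norm is the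
maximum norm. -/
noncomputable def sliceEquiv (p : ℕ) : SliceSpace p ≃L[ℝ] (Fin (p + 1) → ℝ) × ℝ :=
  (WithLp.prodContinuousLinearEquiv 2 ℝ _ _).trans
    ((EuclideanSpace.equiv (Fin (p + 1)) ℝ).prodCongr (.refl ℝ ℝ))

/-- The parametrisation `(x_p, r) ↦ x_p + r ω` as a linear map. -/
noncomputable def ptₗ (m p : ℕ) (w : Fin (m + 1) → ℝ) :
    (Fin (p + 1) → ℝ) × ℝ →ₗ[ℝ] Fin (m + 1) → ℝ where
  toFun z := pt m p w z.1 z.2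
  map_add' z z' := by
    ext s
    simp only [pt, injP, Prod.fst_add, Prod.snd_add, Pi.add_apply, Pi.smul_apply, smul_eq_mul]
    grind
  map_smul' c z := by
    ext s
    simp only [pt, injP, Prod.smul_fst, Prod.smul_snd, Pi.add_apply, Pi.smul_apply, smul_eq_mul,
      RingHom.id_apply]
    grind

theorem sliceEquiv_apply (z : SliceSpace p) : sliceEquiv p z = (z.fst.ofLp, z.snd) :=
  rfl

theorem inner_sliceNormal (z : SliceSpace p) : ⟪sliceNormal p, z⟫ = z.snd := by
  simp [sliceNormal]

theorem norm_sliceNormal : ‖sliceNormal p‖ = 1 := by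
  simp [sliceNormal]

theorem sliceEquiv_reflection (z : SliceSpace p) :
    sliceEquiv p ((ℝ ∙ sliceNormal p)ᗮ.reflection z) =
      ((sliceEquiv p z).1, -(sliceEquiv p z).2) := by
  rw [Submodule.reflection_orthogonal_apply, Submodule.reflection_singleton_apply,
    inner_sliceNormal, norm_sliceNormal]
  ext <;> simp [sliceNormal, sliceEquiv_apply, two_mul]

theorem sum_sq_pt (hp : p ≤ m) (hw : ∀ s : Fin (m + 1), (s : ℕ) ≤ p → w s = 0)
    (hw1 : ∑ s, w s ^ 2 = 1) (y : Fin (p + 1) → ℝ) (r : ℝ) :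
    ∑ s, pt m p w y r s ^ 2 = ∑ s, y s ^ 2 + r ^ 2 := by
  have hsplit : ∀ s, pt m p w y r s ^ 2 = injP m p y s ^ 2 + r ^ 2 * w s ^ 2 := fun s => by
    simp only [pt, injP, Pi.add_apply, Pi.smul_apply, smul_eq_mul]
    grind
  have hinj : ∑ s, injP m p y s ^ 2 = ∑ s, y s ^ 2 := by
    refine (Fintype.sum_of_injective (Fin.castLE (by omega : p + 1 ≤ m + 1))
      (Fin.castLE_injective _) _ _ (fun s hs => ?_) fun s => by simp [injP, s.is_le]).symm
    have hps : ¬(s : ℕ) < p + 1 := fun hsp => hs ⟨⟨s, hsp⟩, rfl⟩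
    simp [injP, hps]
  simp only [hsplit, Finset.sum_add_distrib, hinj, ← Finset.mul_sum, hw1, mul_one]

/-- The symbol `x_p + r n ↦ (x_p + r ω) * ·` of the slice operator `D_{x_p} + ω ∂_r`. -/
noncomputable def sliceSymbol (H : IsAltStarAlg A conj) (v : ℕ → A) (m p : ℕ)
    (w : Fin (m + 1) → ℝ) : SliceSpace p →ₗ[ℝ] A →L[ℝ] A :=
  H.mulLeft ∘ₗ Fintype.linearCombination ℝ (fun i : Fin (m + 1) => v i) ∘ₗ ptₗ m p w ∘ₗ
    (sliceEquiv p).toLinearMap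

/-- The conjugate symbol `x_p + r n ↦ (x_p + r ω)^c * ·`. -/
noncomputable def sliceSymbolConj (H : IsAltStarAlg A conj) (v : ℕ → A) (m p : ℕ)
    (w : Fin (m + 1) → ℝ) : SliceSpace p →ₗ[ℝ] A →L[ℝ] A :=
  H.mulLeft ∘ₗ H.conjₗ ∘ₗ Fintype.linearCombination ℝ (fun i : Fin (m + 1) => v i) ∘ₗ
    ptₗ m p w ∘ₗ (sliceEquiv p).toLinearMap

theorem sliceSymbol_apply (H : IsAltStarAlg A conj) (z : SliceSpace p) (a : A) :
    sliceSymbol H v m p w z a = emb v m (pt m p w z.fst.ofLp z.snd) * a :=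
  rfl

theorem sliceSymbolConj_apply (H : IsAltStarAlg A conj) (z : SliceSpace p) (a : A) :
    sliceSymbolConj H v m p w z a = conj (emb v m (pt m p w z.fst.ofLp z.snd)) * a :=
  rfl

theorem pt_sliceNormal : pt m p w (sliceNormal p).fst.ofLp (sliceNormal p).snd = w := by
  ext s
  simp [pt, injP, sliceNormal]

theorem sliceSymbol_sliceNormal (H : IsAltStarAlg A conj) (a : A) :
    sliceSymbol H v m p w (sliceNormal p) a = emb v m w * a := by
  rw [sliceSymbol_apply, pt_sliceNormal]

theorem isSliceSymbol_sliceSymbol (H : IsAltStarAlg A conj) (hv : IsHypBasis A conj v m)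
    (hp : p ≤ m) (hw : w ∈ Sph v m p) :
    IsSliceSymbol (sliceNormal p) (sliceSymbol H v m p w) (sliceSymbolConj H v m p w) := by
  refine ⟨fun z a => ?_, ContinuousLinearMap.ext fun a => ?_⟩
  · rw [sliceSymbol_apply, sliceSymbolConj_apply, hv.conj_emb_mul_emb_mul H,
      sum_sq_pt hp hw.1 (hv.sum_sq_of_mem_Sph H hw), WithLp.prod_norm_sq_eq_of_L2,
      EuclideanSpace.real_norm_sq_eq, Real.norm_eq_abs, sq_abs]
  · rw [neg_apply, sliceSymbol_sliceNormal, sliceSymbolConj_apply, pt_sliceNormal,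
      hv.conj_emb_of_mem_Sph H hw, H.neg_mul]

theorem pt_eq_pt_of_inner_eq_zero {z : SliceSpace p} (hz : ⟪sliceNormal p, z⟫ = 0) :
    pt m p w z.fst.ofLp z.snd = pt m p η z.fst.ofLp z.snd := by
  rw [inner_sliceNormal] at hz
  simp only [hz, pt, zero_smul]

theorem sliceSymbol_eq_of_inner_eq_zero (H : IsAltStarAlg A conj) {e : SliceSpace p}
    (he : ⟪sliceNormal p, e⟫ = 0) : sliceSymbol H v m p w e = sliceSymbol H v m p η e :=
  ContinuousLinearMap.ext fun a => by
    rw [sliceSymbol_apply, sliceSymbol_apply, pt_eq_pt_of_inner_eq_zero he]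

theorem sliceSymbolConj_eq_of_inner_eq_zero (H : IsAltStarAlg A conj) {e : SliceSpace p}
    (he : ⟪sliceNormal p, e⟫ = 0) : sliceSymbolConj H v m p w e = sliceSymbolConj H v m p η e :=
  ContinuousLinearMap.ext fun a => by
    rw [sliceSymbolConj_apply, sliceSymbolConj_apply, pt_eq_pt_of_inner_eq_zero he]

theorem PSym.mapsTo_reflection (H : IsAltStarAlg A conj) (hv : IsHypBasis A conj v m)
    (hΩ : PSym v m p Ω) (hw : w ∈ Sph v m p) :
    Set.MapsTo (ℝ ∙ sliceNormal p)ᗮ.reflection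
      (sliceEquiv p ⁻¹' sliceSet m p Ω w) (sliceEquiv p ⁻¹' sliceSet m p Ω w) := fun z hz => by
  have hneg := hΩ.pt_mem H hv hw (neg_mem_Sph H hw) hz
  rw [pt_neg_left] at hneg
  rwa [Set.mem_preimage, sliceEquiv_reflection]

theorem diracOp_sliceSymbol (H : IsAltStarAlg A conj) (hp : p ≤ m)
    (G : (Fin (p + 1) → ℝ) × ℝ → A) (z : SliceSpace p) :
    diracOp (sliceBasis p) (sliceSymbol H v m p w) (G ∘ sliceEquiv p) z =
      DomCR v m p w G (sliceEquiv p z) := by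
  have hfderiv : ∀ e, fderiv ℝ (G ∘ sliceEquiv p) z e =
      fderiv ℝ G (sliceEquiv p z) (sliceEquiv p e) := fun e => by
    rw [(sliceEquiv p).comp_right_fderiv]
    rfl
  have hemb : ∀ s : Fin (p + 1), emb v m (pt m p w (Pi.single s 1) 0) = v s := fun s => by
    have hpt : pt m p w (Pi.single s 1) 0 = Pi.single (Fin.castLE (by omega) s) 1 := by
      ext t
      simp only [pt, injP, zero_smul, add_zero, Pi.single_apply, Fin.ext_iff, Fin.val_castLE]
      grind
    rw [hpt, emb_eq_linearCombination, Fintype.linearCombination_apply_single, one_smul]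
    rfl
  have hinl : ∀ s, sliceBasis p (.inl s) = WithLp.toLp 2 (EuclideanSpace.single s 1, 0) :=
    fun s => by simp [sliceBasis]
  have hinr : sliceBasis p (.inr ()) = sliceNormal p := by
    simp [sliceBasis, sliceNormal]
  simp only [diracOp, Fintype.sum_sum_type, Finset.univ_unique, Finset.sum_singleton,
    PUnit.default_eq_unit, hfderiv, hinl, hinr, sliceSymbol_sliceNormal, DomCR, DopSx]
  congr 1
  refine Finset.sum_congr rfl fun s _ => ?_
  rw [sliceSymbol_apply]
  exact congrArg (· * _) (hemb s)

theorem GSM.isMonogenicOn (H : IsAltStarAlg A conj) (hp : p ≤ m) (hf : GSM v m p f Ω)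
    (hw : w ∈ Sph v m p) :
    IsMonogenicOn (sliceBasis p) (sliceSymbol H v m p w) (sliceFun m p f w ∘ sliceEquiv p)
      (sliceEquiv p ⁻¹' sliceSet m p Ω w) :=
  ⟨(hf w hw).1.comp (sliceEquiv p).contDiff.contDiffOn (Set.mapsTo_preimage _ _), fun z hz =>
    (diracOp_sliceSymbol H hp _ z).trans ((hf w hw).2 _ hz)⟩

theorem isOpen_sliceSet (hΩ : IsOpen Ω) (w : Fin (m + 1) → ℝ) : IsOpen (sliceSet m p Ω w) :=
  hΩ.preimage (ptₗ m p w).continuous_of_finiteDimensional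

theorem pt_projP {x : Fin (m + 1) → ℝ} (hx : xqpart m p x = 0) (w : Fin (m + 1) → ℝ) :
    pt m p w (projP m p x) 0 = x := by
  ext s
  have hxs := congrFun hx s
  simp only [xqpart, Pi.zero_apply] at hxs
  simp only [pt, injP, projP, zero_smul, add_zero]
  grind

theorem GSM.slice_representation (H : IsAltStarAlg A conj) (hv : IsHypBasis A conj v m)
    (hp : p ≤ m) (hsym : PSym v m p Ω) (hΩ : SliceDomain v m p Ω) (hf : GSM v m p f Ω)
    (hw : w ∈ Sph v m p) (hη : η ∈ Sph v m p) (h : pt m p w y r ∈ Ω) :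
    f (pt m p w y r) = (2 : ℝ)⁻¹ • (f (pt m p η y r) + f (pt m p η y (-r))) +
        (2 : ℝ)⁻¹ •
          (emb v m w * (emb v m η * (f (pt m p η y (-r)) - f (pt m p η y r)))) ∧
      (2 : ℝ)⁻¹ • (f (pt m p w y r) + f (pt m p w y (-r))) =
        (2 : ℝ)⁻¹ • (f (pt m p η y r) + f (pt m p η y (-r))) ∧
      (2 : ℝ)⁻¹ • (emb v m w * (f (pt m p w y (-r)) - f (pt m p w y r))) =
        (2 : ℝ)⁻¹ • (emb v m η * (f (pt m p η y (-r)) - f (pt m p η y r))) := by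
  have := H.finDim
  have : CompleteSpace A := FiniteDimensional.complete ℝ A
  obtain ⟨hopen, -, ⟨x, hx, hxq⟩, hslice⟩ := hΩ
  have hF := hf.isMonogenicOn H hp hw
  have hG : IsMonogenicOn (sliceBasis p) (sliceSymbol H v m p η) (sliceFun m p f η ∘ sliceEquiv p)
      (sliceEquiv p ⁻¹' sliceSet m p Ω w) :=
    hsym.sliceSet_eq H hv hw hη ▸ hf.isMonogenicOn H hp hη
  have hformula := hF.representation_formula (isSliceSymbol_sliceSymbol H hv hp hw)
    (isSliceSymbol_sliceSymbol H hv hp hη) norm_sliceNormal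
    (fun _ => sliceSymbol_eq_of_inner_eq_zero H) (fun _ => sliceSymbolConj_eq_of_inner_eq_zero H)
    ((isOpen_sliceSet hopen w).preimage (sliceEquiv p).continuous)
    ((sliceEquiv p).toHomeomorph.isPreconnected_preimage.2 (hslice w hw).isPreconnected)
    (hsym.mapsTo_reflection H hv hw) (a := (sliceEquiv p).symm (projP m p x, 0))
    (by simpa [sliceSet, pt_projP hxq] using hx) (inner_sliceNormal _) hG
    (fun z _ hz => congrArg f (pt_eq_pt_of_inner_eq_zero hz))
    (z := (sliceEquiv p).symm (y, r)) (by simpa [sliceSet] using h)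
  simpa only [Function.comp_apply, sliceEquiv_reflection, ContinuousLinearEquiv.apply_symm_apply,
    sliceSymbol_sliceNormal, sliceFun] using hformula

end Slice

end

/-- **Representation Formula.** For a left generalized partial-slice monogenic
function on a p-symmetric slice domain,
`f(x_p + rω) = ½(f(x_p + rη) + f(x_p - rη)) + ½ ω (η (f(x_p - rη) - f(x_p + rη)))`
for all `ω, η ∈ 𝕊`; moreover the two bracketed functions do not depend on `η`. -/
theorem representation_formula
    {A : Type*} [NormedAddCommGroup A] [NormedSpace ℝ A] [Mul A] [One A]
    (conj : A → A) (H : IsAltStarAlg A conj)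
    (v : ℕ → A) (m p : ℕ) (hv : IsHypBasis A conj v m) (hp : p < m)
    (Ω : Set (Fin (m + 1) → ℝ)) (hsym : PSym v m p Ω) (hΩ : SliceDomain v m p Ω)
    (f : (Fin (m + 1) → ℝ) → A) (hf : GSM v m p f Ω)
    (w : Fin (m + 1) → ℝ) (hw : w ∈ Sph v m p)
    (η : Fin (m + 1) → ℝ) (hη : η ∈ Sph v m p)
    (y : Fin (p + 1) → ℝ) (r : ℝ) (hx : pt m p w y r ∈ Ω) :
    f (pt m p w y r) =
        (2 : ℝ)⁻¹ • (f (pt m p η y r) + f (pt m p η y (-r))) +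
        (2 : ℝ)⁻¹ •
          (emb v m w * (emb v m η * (f (pt m p η y (-r)) - f (pt m p η y r)))) ∧
    (∀ η' ∈ Sph v m p,
      (2 : ℝ)⁻¹ • (f (pt m p η y r) + f (pt m p η y (-r))) =
        (2 : ℝ)⁻¹ • (f (pt m p η' y r) + f (pt m p η' y (-r))) ∧
      (2 : ℝ)⁻¹ • (emb v m η * (f (pt m p η y (-r)) - f (pt m p η y r))) =
        (2 : ℝ)⁻¹ • (emb v m η' * (f (pt m p η' y (-r)) - f (pt m p η' y r)))) := by
  exact ⟨(hf.slice_representation H hv hp.le hsym hΩ hw hη hx).1, fun η' hη' =>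
    (hf.slice_representation H hv hp.le hsym hΩ hη hη' (hsym.pt_mem H hv hw hη hx)).2⟩

end GPSM
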